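/- arXiv:1410.7081 — 2 statements merged into one kernel-verified Lean document; each statement's English description precedes it below -/
import Mathlib

section
/- ∫₀¹ (k/k')^{3/4} K(k) dk = (π²/12)·√(5 + 1/√2), where k' = √(1-k²). -/
open scoped Real
open MeasureTheory

noncomputable def EllK (k : ℝ) : ℝ :=
  ∫ x in (0:ℝ)..(1:ℝ), 1 / Real.sqrt ((1 - x^2) * (1 - k^2 * x^2))

noncomputable def EllE (k : ℝ) : ℝ :=
  ∫ x in (0:ℝ)..(1:ℝ), Real.sqrt ((1 - k^2 * x^2) / (1 - x^2))

noncomputable def EllK' (k : ℝ) : ℝ := EllK (Real.sqrt (1 - k^2))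

/-!
Integrating by parts against `v / √(1 - k²v²)` turns `K(k)` into the moment
`∫ arcosh (1/v) (1 - k²v²)^(-3/2) dv`; the integral in `k` is then a Beta integral through
`t = k²(1 - v²) / (1 - k²v²)`. For the exponent `3/4`, the substitution `v² = 1 - x⁴` leaves
`∫ log ((1 + x²) / (1 - x²)) ω` with `ω = dx / √(x (1 - x⁴))`.

The involution `σ x = (1 - x) / (1 + x)` carries `ω` to `(1 + x) ω / √2`, up to orientation, and
with `R = (1 - x⁴) / (4x²)` one has `((1 + x²) / (1 - x²))³ = R · (R ∘ σ)²`. Hence only the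
integrals of `log R` against `ω` and `x ω` are needed. These are log-Beta integrals whose digamma
differences reduce to `±π / 2` by the duplication and reflection formulas.
-/

open Set Filter Topology ProbabilityTheory

section Digamma

lemma hasDerivAt_Gamma_of_pos {s : ℝ} (hs : 0 < s) :
    HasDerivAt Real.Gamma (Real.Gamma s * logDeriv Real.Gamma s) s := by
  have hd : DifferentiableAt ℝ Real.Gamma s :=
    Real.differentiableAt_Gamma fun m ↦ by have : (0 : ℝ) ≤ m := m.cast_nonneg; linarith
  rw [logDeriv_apply, mul_div_cancel₀ _ (Real.Gamma_pos_of_pos hs).ne']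
  exact hd.hasDerivAt

lemma hasDerivAt_log_Gamma_of_pos {s : ℝ} (hs : 0 < s) :
    HasDerivAt (fun x ↦ Real.log (Real.Gamma x)) (logDeriv Real.Gamma s) s := by
  have hΓ := (Real.Gamma_pos_of_pos hs).ne'
  convert (hasDerivAt_Gamma_of_pos hs).log hΓ using 1
  field_simp

lemma logDeriv_Gamma_add_logDeriv_Gamma_add_half {s : ℝ} (hs : 0 < s) :
    logDeriv Real.Gamma s + logDeriv Real.Gamma (s + 1 / 2)
      = 2 * logDeriv Real.Gamma (2 * s) - 2 * Real.log 2 := by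
  have log_duplication : (fun x ↦ Real.log (Real.Gamma x) + Real.log (Real.Gamma (x + 1 / 2)))
      =ᶠ[𝓝 s] fun x ↦ Real.log (Real.Gamma (2 * x)) + (1 - 2 * x) * Real.log 2
        + Real.log √π := by
    filter_upwards [lt_mem_nhds hs] with x hx
    have h₁ := (Real.Gamma_pos_of_pos hx).ne'
    have h₂ := (Real.Gamma_pos_of_pos (show 0 < x + 1 / 2 by positivity)).ne'
    have h₃ := (Real.Gamma_pos_of_pos (show 0 < 2 * x by positivity)).ne'
    rw [← Real.log_mul h₁ h₂, Real.Gamma_mul_Gamma_add_half, Real.log_mul (by positivity)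
      (by positivity), Real.log_mul h₃ (by positivity), Real.log_rpow two_pos]
  have hleft := (hasDerivAt_log_Gamma_of_pos hs).add
    ((hasDerivAt_log_Gamma_of_pos (show 0 < s + 1 / 2 by positivity)).comp_add_const s (1 / 2))
  have hright := ((((hasDerivAt_log_Gamma_of_pos (show 0 < 2 * s by positivity)).comp s
    ((hasDerivAt_id s).const_mul 2))).add
    ((((hasDerivAt_id s).const_mul 2).const_sub 1).mul_const (Real.log 2))).add_const
    (Real.log √π)
  have := hleft.unique (hright.congr_of_eventuallyEq log_duplication)
  linarith

lemma logDeriv_Gamma_one_sub_sub_logDeriv_Gamma {s : ℝ} (hs₀ : 0 < s) (hs₁ : s < 1) :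
    logDeriv Real.Gamma (1 - s) - logDeriv Real.Gamma s
      = π * Real.cos (π * s) / Real.sin (π * s) := by
  have hsin {x : ℝ} (h₀ : 0 < x) (h₁ : x < 1) : 0 < Real.sin (π * x) :=
    Real.sin_pos_of_pos_of_lt_pi (by positivity) (by nlinarith [Real.pi_pos])
  have log_reflection : (fun x ↦ Real.log (Real.Gamma x) + Real.log (Real.Gamma (1 - x)))
      =ᶠ[𝓝 s] fun x ↦ Real.log π - Real.log (Real.sin (π * x)) := by
    filter_upwards [lt_mem_nhds hs₀, gt_mem_nhds hs₁] with x h₀ h₁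
    rw [← Real.log_mul (Real.Gamma_pos_of_pos h₀).ne' (Real.Gamma_pos_of_pos (sub_pos.2 h₁)).ne',
      Real.Gamma_mul_Gamma_one_sub, Real.log_div Real.pi_ne_zero (hsin h₀ h₁).ne']
  have hleft := (hasDerivAt_log_Gamma_of_pos hs₀).add
    ((hasDerivAt_log_Gamma_of_pos (sub_pos.2 hs₁)).comp_const_sub 1 s)
  have hright := ((((hasDerivAt_id s).const_mul π).sin.log (hsin hs₀ hs₁).ne').const_sub
    (Real.log π))
  have := hleft.unique (hright.congr_of_eventuallyEq log_reflection)
  simp only [id, mul_one] at this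
  rw [mul_comm π (Real.cos _)]
  linarith

lemma logDeriv_Gamma_half_sub_quarter :
    logDeriv Real.Gamma (1 / 2) - logDeriv Real.Gamma (1 / 4) - Real.log 2 = π / 2 := by
  have h := logDeriv_Gamma_add_logDeriv_Gamma_add_half (s := 1 / 4) (by norm_num)
  have h' := logDeriv_Gamma_one_sub_sub_logDeriv_Gamma (s := 1 / 4) (by norm_num) (by norm_num)
  rw [mul_one_div, Real.cos_pi_div_four, Real.sin_pi_div_four, mul_div_cancel_right₀ _
    (by positivity)] at h'
  norm_num at h h' ⊢
  linarith

lemma logDeriv_Gamma_half_sub_three_quarters :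
    logDeriv Real.Gamma (1 / 2) - logDeriv Real.Gamma (3 / 4) - Real.log 2 = -(π / 2) := by
  have h := logDeriv_Gamma_add_logDeriv_Gamma_add_half (s := 1 / 4) (by norm_num)
  have h' := logDeriv_Gamma_half_sub_quarter
  norm_num at h h' ⊢
  linarith

end Digamma

section ChangeOfVariables

variable {s t : Set ℝ} {f f' : ℝ → ℝ}

lemma setIntegral_eq_of_bijOn (hs : MeasurableSet s) (hf : BijOn f s t)
    (hf' : ∀ x ∈ s, HasDerivAt f (f' x) x) (g : ℝ → ℝ) :
    ∫ y in t, g y = ∫ x in s, |f' x| * g (f x) := by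
  rw [← hf.image_eq]
  exact integral_image_eq_integral_abs_deriv_smul hs
    (fun x hx ↦ (hf' x hx).hasDerivWithinAt) hf.injOn g

lemma integrableOn_iff_of_bijOn (hs : MeasurableSet s) (hf : BijOn f s t)
    (hf' : ∀ x ∈ s, HasDerivAt f (f' x) x) (g : ℝ → ℝ) :
    IntegrableOn g t ↔ IntegrableOn (fun x ↦ |f' x| * g (f x)) s := by
  rw [← hf.image_eq]
  exact integrableOn_image_iff_integrableOn_abs_deriv_smul hs
    (fun x hx ↦ (hf' x hx).hasDerivWithinAt) hf.injOn g

lemma bijOn_one_sub_Ioo : BijOn (fun t : ℝ ↦ 1 - t) (Ioo 0 1) (Ioo 0 1) :=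
  InvOn.bijOn (f' := fun t ↦ 1 - t) ⟨fun _ _ ↦ sub_sub_cancel .., fun _ _ ↦ sub_sub_cancel ..⟩
    (fun _ ht ↦ ⟨sub_pos.2 ht.2, sub_lt_self _ ht.1⟩)
    (fun _ ht ↦ ⟨sub_pos.2 ht.2, sub_lt_self _ ht.1⟩)

lemma bijOn_pow_Ioo {n : ℕ} (hn : n ≠ 0) : BijOn (fun x : ℝ ↦ x ^ n) (Ioo 0 1) (Ioo 0 1) := by
  refine ⟨fun x hx ↦ ⟨pow_pos hx.1 n, pow_lt_one₀ hx.1.le hx.2 hn⟩,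
    fun x hx y hy h ↦ (pow_left_inj₀ hx.1.le hy.1.le hn).1 h, fun y hy ↦ ?_⟩
  exact ⟨y ^ (n : ℝ)⁻¹, ⟨Real.rpow_pos_of_pos hy.1 _,
    Real.rpow_lt_one hy.1.le hy.2 (by positivity)⟩, Real.rpow_inv_natCast_pow hy.1.le hn⟩

lemma bijOn_sqrt_one_sub_sq_Ioo : BijOn (fun x : ℝ ↦ √(1 - x ^ 2)) (Ioo 0 1) (Ioo 0 1) := by
  have hmaps : MapsTo (fun x : ℝ ↦ √(1 - x ^ 2)) (Ioo 0 1) (Ioo 0 1) := fun x ⟨h₀, h₁⟩ ↦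
    ⟨Real.sqrt_pos.2 (by nlinarith), (Real.sqrt_lt' one_pos).2 (by nlinarith)⟩
  have hinv : LeftInvOn (fun x : ℝ ↦ √(1 - x ^ 2)) (fun x ↦ √(1 - x ^ 2)) (Ioo 0 1) := by
    intro x ⟨h₀, h₁⟩
    dsimp only
    rw [Real.sq_sqrt (by nlinarith), sub_sub_cancel, Real.sqrt_sq h₀.le]
  exact InvOn.bijOn ⟨hinv, hinv⟩ hmaps hmaps

end ChangeOfVariables

section BetaIntegral

variable {a b : ℝ}

lemma ofReal_rpow_mul_one_sub_rpow {t : ℝ} (ht : t ∈ Ioo 0 1) :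
    ((t ^ (a - 1) * (1 - t) ^ (b - 1) : ℝ) : ℂ)
      = (t : ℂ) ^ ((a : ℂ) - 1) * (1 - (t : ℂ)) ^ ((b : ℂ) - 1) := by
  rw [Complex.ofReal_mul, Complex.ofReal_cpow ht.1.le, Complex.ofReal_cpow (sub_pos.2 ht.2).le]
  push_cast
  rfl

lemma integrableOn_rpow_mul_one_sub_rpow (ha : 0 < a) (hb : 0 < b) :
    IntegrableOn (fun t : ℝ ↦ t ^ (a - 1) * (1 - t) ^ (b - 1)) (Ioo 0 1) := by
  have hconv := Complex.betaIntegral_convergent (u := a) (v := b) (by simpa) (by simpa)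
  rw [intervalIntegrable_iff_integrableOn_Ioo_of_le zero_le_one] at hconv
  refine IntegrableOn.congr_fun hconv.re (fun t ht ↦ ?_) measurableSet_Ioo
  simp only [← ofReal_rpow_mul_one_sub_rpow ht, RCLike.re_to_complex, Complex.ofReal_re]

lemma integral_rpow_mul_one_sub_rpow (ha : 0 < a) (hb : 0 < b) :
    ∫ t in Ioo (0 : ℝ) 1, t ^ (a - 1) * (1 - t) ^ (b - 1) = beta a b := by
  rw [beta_eq_betaIntegralReal a b ha hb, Complex.betaIntegral,
    intervalIntegral.integral_of_le zero_le_one, integral_Ioc_eq_integral_Ioo,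
    ← setIntegral_congr_fun measurableSet_Ioo fun t ht ↦ ofReal_rpow_mul_one_sub_rpow ht,
    integral_complex_ofReal, Complex.ofReal_re]

lemma beta_comm (a b : ℝ) : beta a b = beta b a := by
  rw [beta, beta, mul_comm, add_comm]

lemma hasDerivAt_beta (ha : 0 < a) (hb : 0 < b) :
    HasDerivAt (fun x ↦ beta x b)
      (beta a b * (logDeriv Real.Gamma a - logDeriv Real.Gamma (a + b))) a := by
  have hab := (Real.Gamma_pos_of_pos (add_pos ha hb)).ne'
  refine (((hasDerivAt_Gamma_of_pos ha).mul_const (Real.Gamma b)).div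
    ((hasDerivAt_Gamma_of_pos (add_pos ha hb)).comp_add_const a b) hab).congr_deriv ?_
  rw [beta]
  field_simp

lemma norm_log_mul_rpow_mul_one_sub_rpow_le (ha : 0 < a) {x : ℝ} (hx : a / 2 < x) {t : ℝ}
    (ht : t ∈ Ioo 0 1) :
    ‖Real.log t * (t ^ (x - 1) * (1 - t) ^ (b - 1))‖
      ≤ 4 / a * (t ^ (a / 4 - 1) * (1 - t) ^ (b - 1)) := by
  obtain ⟨ht₀, ht₁⟩ := ht
  have hlog : |Real.log t * t ^ (a / 4)| ≤ 4 / a := by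
    simpa using (Real.abs_log_mul_self_rpow_lt t (a / 4) ht₀ ht₁.le (by positivity)).le
  have hpow : t ^ (x - 1) ≤ t ^ (a / 4) * t ^ (a / 4 - 1) := by
    rw [← Real.rpow_add ht₀]
    exact Real.rpow_le_rpow_of_exponent_ge ht₀ ht₁.le (by linarith)
  have : 0 ≤ (1 - t) ^ (b - 1) := Real.rpow_nonneg (by linarith) _
  calc ‖Real.log t * (t ^ (x - 1) * (1 - t) ^ (b - 1))‖
      = |Real.log t| * (t ^ (x - 1) * (1 - t) ^ (b - 1)) := by
        rw [norm_mul, Real.norm_eq_abs, Real.norm_of_nonneg (by positivity)]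
    _ ≤ |Real.log t| * ((t ^ (a / 4) * t ^ (a / 4 - 1)) * (1 - t) ^ (b - 1)) := by gcongr
    _ = |Real.log t * t ^ (a / 4)| * (t ^ (a / 4 - 1) * (1 - t) ^ (b - 1)) := by
        rw [abs_mul, abs_of_nonneg (Real.rpow_nonneg ht₀.le _)]; ring
    _ ≤ 4 / a * (t ^ (a / 4 - 1) * (1 - t) ^ (b - 1)) := by gcongr

lemma integrableOn_and_hasDerivAt_integral_rpow_mul_one_sub_rpow (ha : 0 < a) (hb : 0 < b) :
    IntegrableOn (fun t : ℝ ↦ Real.log t * (t ^ (a - 1) * (1 - t) ^ (b - 1))) (Ioo 0 1) ∧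
      HasDerivAt (fun x ↦ ∫ t in Ioo (0 : ℝ) 1, t ^ (x - 1) * (1 - t) ^ (b - 1))
        (∫ t in Ioo (0 : ℝ) 1, Real.log t * (t ^ (a - 1) * (1 - t) ^ (b - 1))) a := by
  refine hasDerivAt_integral_of_dominated_loc_of_deriv_le
    (bound := fun t ↦ 4 / a * (t ^ (a / 4 - 1) * (1 - t) ^ (b - 1)))
    (F := fun x t ↦ t ^ (x - 1) * (1 - t) ^ (b - 1))
    (F' := fun x t ↦ Real.log t * (t ^ (x - 1) * (1 - t) ^ (b - 1)))
    (Ioi_mem_nhds (half_lt_self ha)) (.of_forall fun x ↦ ?_)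
    (integrableOn_rpow_mul_one_sub_rpow ha hb) ?_ ?_
    ((integrableOn_rpow_mul_one_sub_rpow (by positivity) hb).const_mul _) ?_
  · exact (by fun_prop : Measurable _).aestronglyMeasurable
  · exact (by fun_prop : Measurable _).aestronglyMeasurable
  · filter_upwards [ae_restrict_mem measurableSet_Ioo] with t ht x hx
    exact norm_log_mul_rpow_mul_one_sub_rpow_le ha hx ht
  · filter_upwards [ae_restrict_mem measurableSet_Ioo] with t ht x _
    refine ((((hasDerivAt_id' x).sub_const 1).const_rpow ht.1).mul_const
      ((1 - t) ^ (b - 1))).congr_deriv ?_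
    ring

lemma integrableOn_log_mul_rpow_mul_one_sub_rpow (ha : 0 < a) (hb : 0 < b) :
    IntegrableOn (fun t : ℝ ↦ Real.log t * (t ^ (a - 1) * (1 - t) ^ (b - 1))) (Ioo 0 1) :=
  (integrableOn_and_hasDerivAt_integral_rpow_mul_one_sub_rpow ha hb).1

lemma integral_log_mul_rpow_mul_one_sub_rpow (ha : 0 < a) (hb : 0 < b) :
    ∫ t in Ioo (0 : ℝ) 1, Real.log t * (t ^ (a - 1) * (1 - t) ^ (b - 1))
      = beta a b * (logDeriv Real.Gamma a - logDeriv Real.Gamma (a + b)) := by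
  have integral_eq_beta : (fun x ↦ ∫ t in Ioo (0 : ℝ) 1, t ^ (x - 1) * (1 - t) ^ (b - 1))
      =ᶠ[𝓝 a] fun x ↦ beta x b := by
    filter_upwards [lt_mem_nhds ha] with x hx using integral_rpow_mul_one_sub_rpow hx hb
  exact (integrableOn_and_hasDerivAt_integral_rpow_mul_one_sub_rpow ha hb).2.unique
    ((hasDerivAt_beta ha hb).congr_of_eventuallyEq integral_eq_beta)

lemma integrableOn_log_one_sub_mul_rpow_mul_one_sub_rpow (ha : 0 < a) (hb : 0 < b) :
    IntegrableOn (fun t : ℝ ↦ Real.log (1 - t) * (t ^ (a - 1) * (1 - t) ^ (b - 1))) (Ioo 0 1) := by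
  have h := (integrableOn_iff_of_bijOn measurableSet_Ioo bijOn_one_sub_Ioo
    (fun t _ ↦ (hasDerivAt_id' t).const_sub 1) _).1
    (integrableOn_log_mul_rpow_mul_one_sub_rpow hb ha)
  simpa only [abs_neg, abs_one, one_mul, sub_sub_cancel, fun t : ℝ ↦
    mul_comm ((1 - t) ^ (b - 1)) (t ^ (a - 1))] using h

lemma integral_log_one_sub_mul_rpow_mul_one_sub_rpow (ha : 0 < a) (hb : 0 < b) :
    ∫ t in Ioo (0 : ℝ) 1, Real.log (1 - t) * (t ^ (a - 1) * (1 - t) ^ (b - 1))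
      = beta a b * (logDeriv Real.Gamma b - logDeriv Real.Gamma (a + b)) := by
  have h := setIntegral_eq_of_bijOn measurableSet_Ioo bijOn_one_sub_Ioo
    (fun t _ ↦ (hasDerivAt_id' t).const_sub 1)
    (fun t ↦ Real.log t * (t ^ (b - 1) * (1 - t) ^ (a - 1)))
  simp only [abs_neg, abs_one, one_mul, sub_sub_cancel, fun t : ℝ ↦
    mul_comm ((1 - t) ^ (b - 1)) (t ^ (a - 1))] at h
  rw [← h, integral_log_mul_rpow_mul_one_sub_rpow hb ha, beta_comm, add_comm]

end BetaIntegral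

section QuarticBetaIntegral

variable {a : ℝ}

lemma abs_deriv_pow_four_mul_rpow {x : ℝ} (hx : x ∈ Ioo 0 1) (F : ℝ → ℝ) :
    |4 * x ^ 3| * (F (x ^ 4) * ((x ^ 4) ^ (a - 1) * (1 - x ^ 4) ^ ((1 / 2 : ℝ) - 1)))
      = 4 * (F (x ^ 4) * (x ^ (4 * a - 1) / √(1 - x ^ 4))) := by
  have hx₀ : 0 < x := hx.1
  have h₁ : 0 < 1 - x ^ 4 := sub_pos.2 (pow_lt_one₀ hx₀.le hx.2 four_ne_zero)
  have hpow : x ^ 3 * (x ^ 4) ^ (a - 1) = x ^ (4 * a - 1) := by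
    rw [← Real.rpow_natCast x 3, ← Real.rpow_natCast x 4, ← Real.rpow_mul hx₀.le,
      ← Real.rpow_add hx₀]
    push_cast
    ring_nf
  have hsqrt : (1 - x ^ 4) ^ ((1 / 2 : ℝ) - 1) = 1 / √(1 - x ^ 4) := by
    rw [Real.sqrt_eq_rpow, one_div (_ ^ _), ← Real.rpow_neg h₁.le]
    norm_num
  rw [abs_of_pos (by positivity), hsqrt, ← hpow]
  ring

lemma hasDerivAt_pow_four (x : ℝ) : HasDerivAt (fun x : ℝ ↦ x ^ 4) (4 * x ^ 3) x := by
  simpa using hasDerivAt_pow 4 x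

lemma integrableOn_comp_pow_four_mul {F : ℝ → ℝ}
    (hF : IntegrableOn (fun t ↦ F t * (t ^ (a - 1) * (1 - t) ^ ((1 / 2 : ℝ) - 1))) (Ioo 0 1)) :
    IntegrableOn (fun x : ℝ ↦ F (x ^ 4) * (x ^ (4 * a - 1) / √(1 - x ^ 4))) (Ioo 0 1) := by
  rw [integrableOn_iff_of_bijOn measurableSet_Ioo (bijOn_pow_Ioo four_ne_zero)
    (fun x _ ↦ hasDerivAt_pow_four x), integrableOn_congr_fun
    (fun x hx ↦ abs_deriv_pow_four_mul_rpow hx F) measurableSet_Ioo] at hF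
  simpa [IntegrableOn] using hF.const_mul 4⁻¹

lemma integral_comp_pow_four_mul (F : ℝ → ℝ) :
    ∫ x in Ioo (0 : ℝ) 1, F (x ^ 4) * (x ^ (4 * a - 1) / √(1 - x ^ 4))
      = 1 / 4 * ∫ t in Ioo (0 : ℝ) 1, F t * (t ^ (a - 1) * (1 - t) ^ ((1 / 2 : ℝ) - 1)) := by
  rw [setIntegral_eq_of_bijOn (t := Ioo 0 1) measurableSet_Ioo (bijOn_pow_Ioo four_ne_zero)
    (fun x _ ↦ hasDerivAt_pow_four x) (fun t ↦ F t * _), setIntegral_congr_fun measurableSet_Ioo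
    (fun x hx ↦ abs_deriv_pow_four_mul_rpow hx F), integral_const_mul]
  ring

lemma integral_rpow_div_sqrt_one_sub_pow_four (ha : 0 < a) :
    ∫ x in Ioo (0 : ℝ) 1, x ^ (4 * a - 1) / √(1 - x ^ 4) = 1 / 4 * beta a (1 / 2) := by
  rw [← integral_rpow_mul_one_sub_rpow ha one_half_pos]
  simpa only [one_mul] using integral_comp_pow_four_mul (a := a) fun _ ↦ 1

lemma log_one_sub_pow_four_div {x : ℝ} (hx : x ∈ Ioo 0 1) :
    Real.log ((1 - x ^ 4) / (4 * x ^ 2))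
      = Real.log (1 - x ^ 4) - 1 / 2 * Real.log (x ^ 4) - Real.log 4 := by
  have hx₀ : x ≠ 0 := hx.1.ne'
  have h₁ : 1 - x ^ 4 ≠ 0 := (sub_pos.2 (pow_lt_one₀ hx.1.le hx.2 four_ne_zero)).ne'
  rw [Real.log_div h₁ (by positivity), Real.log_mul four_ne_zero (by positivity), Real.log_pow,
    Real.log_pow]
  push_cast
  ring

lemma integrableOn_and_integral_log_one_sub_sub_half_log_mul (ha : 0 < a) :
    IntegrableOn (fun t : ℝ ↦ (Real.log (1 - t) - 1 / 2 * Real.log t - Real.log 4)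
        * (t ^ (a - 1) * (1 - t) ^ ((1 / 2 : ℝ) - 1))) (Ioo 0 1) ∧
      ∫ t in Ioo (0 : ℝ) 1, (Real.log (1 - t) - 1 / 2 * Real.log t - Real.log 4)
        * (t ^ (a - 1) * (1 - t) ^ ((1 / 2 : ℝ) - 1))
      = beta a (1 / 2)
        * (logDeriv Real.Gamma (1 / 2) - logDeriv Real.Gamma (2 * a) - Real.log 2) := by
  have h₁ := integrableOn_log_one_sub_mul_rpow_mul_one_sub_rpow ha one_half_pos
  have h₂ := (integrableOn_log_mul_rpow_mul_one_sub_rpow ha one_half_pos).const_mul (1 / 2)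
  have h₃ := (integrableOn_rpow_mul_one_sub_rpow ha one_half_pos).const_mul (Real.log 4)
  simp only [sub_mul, mul_assoc (1 / 2 : ℝ) (Real.log _)]
  refine ⟨(h₁.sub h₂).sub h₃, ?_⟩
  rw [integral_sub (by exact h₁.sub h₂) h₃, integral_sub h₁ h₂, integral_const_mul,
    integral_const_mul, integral_log_one_sub_mul_rpow_mul_one_sub_rpow ha one_half_pos,
    integral_log_mul_rpow_mul_one_sub_rpow ha one_half_pos,
    integral_rpow_mul_one_sub_rpow ha one_half_pos,
    show Real.log 4 = 2 * Real.log 2 by rw [← Real.log_rpow two_pos]; norm_num]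
  linear_combination (-1 / 2) * beta a (1 / 2) * logDeriv_Gamma_add_logDeriv_Gamma_add_half ha

lemma integrableOn_log_mul_rpow_div_sqrt_one_sub_pow_four (ha : 0 < a) :
    IntegrableOn (fun x : ℝ ↦ Real.log ((1 - x ^ 4) / (4 * x ^ 2))
      * (x ^ (4 * a - 1) / √(1 - x ^ 4))) (Ioo 0 1) := by
  refine (integrableOn_comp_pow_four_mul
    (integrableOn_and_integral_log_one_sub_sub_half_log_mul ha).1).congr_fun (fun x hx ↦ ?_)
    measurableSet_Ioo
  rw [log_one_sub_pow_four_div hx]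

lemma integral_log_mul_rpow_div_sqrt_one_sub_pow_four (ha : 0 < a) :
    ∫ x in Ioo (0 : ℝ) 1, Real.log ((1 - x ^ 4) / (4 * x ^ 2)) * (x ^ (4 * a - 1) / √(1 - x ^ 4))
      = 1 / 4 * beta a (1 / 2)
        * (logDeriv Real.Gamma (1 / 2) - logDeriv Real.Gamma (2 * a) - Real.log 2) := by
  rw [mul_assoc, ← (integrableOn_and_integral_log_one_sub_sub_half_log_mul ha).2,
    ← integral_comp_pow_four_mul]
  exact setIntegral_congr_fun measurableSet_Ioo fun x hx ↦ by rw [log_one_sub_pow_four_div hx]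

end QuarticBetaIntegral

section OctahedralDensity

/-- The density `dx / y` of the holomorphic differential on the octahedral curve
`y² = x (1 - x⁴)`, along its real arc `0 < x < 1`. -/
noncomputable def octahedralDensity (x : ℝ) : ℝ := 1 / √(x * (1 - x ^ 4))

lemma octahedralDensity_eq_rpow_div_sqrt {x : ℝ} (hx : 0 < x) :
    octahedralDensity x = x ^ (4 * (1 / 8 : ℝ) - 1) / √(1 - x ^ 4) := by
  rw [octahedralDensity, Real.sqrt_mul hx.le, Real.sqrt_eq_rpow x, ← div_div, one_div (_ ^ _),
    ← Real.rpow_neg hx.le]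
  norm_num

lemma mul_octahedralDensity_eq_rpow_div_sqrt {x : ℝ} (hx : 0 < x) :
    x * octahedralDensity x = x ^ (4 * (3 / 8 : ℝ) - 1) / √(1 - x ^ 4) := by
  rw [octahedralDensity_eq_rpow_div_sqrt hx, ← mul_div_assoc, ← Real.rpow_one_add' hx.le]
  · norm_num
  · norm_num

lemma integral_octahedralDensity :
    ∫ x in Ioo 0 1, octahedralDensity x = 1 / 4 * beta (1 / 8) (1 / 2) := by
  rw [← integral_rpow_div_sqrt_one_sub_pow_four (by norm_num)]
  exact setIntegral_congr_fun measurableSet_Ioo fun x hx ↦ octahedralDensity_eq_rpow_div_sqrt hx.1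

lemma integral_mul_octahedralDensity :
    ∫ x in Ioo 0 1, x * octahedralDensity x = 1 / 4 * beta (3 / 8) (1 / 2) := by
  rw [← integral_rpow_div_sqrt_one_sub_pow_four (by norm_num)]
  exact setIntegral_congr_fun measurableSet_Ioo fun x hx ↦
    mul_octahedralDensity_eq_rpow_div_sqrt hx.1

lemma integrableOn_octahedralDensity : IntegrableOn octahedralDensity (Ioo 0 1) :=
  Integrable.of_integral_ne_zero <| by
    rw [integral_octahedralDensity]
    exact (mul_pos (by norm_num) (beta_pos (by norm_num) (by norm_num))).ne'

lemma integrableOn_mul_octahedralDensity :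
    IntegrableOn (fun x ↦ x * octahedralDensity x) (Ioo 0 1) :=
  Integrable.of_integral_ne_zero <| by
    rw [integral_mul_octahedralDensity]
    exact (mul_pos (by norm_num) (beta_pos (by norm_num) (by norm_num))).ne'

lemma integrableOn_log_mul_octahedralDensity :
    IntegrableOn (fun x ↦ Real.log ((1 - x ^ 4) / (4 * x ^ 2)) * octahedralDensity x)
      (Ioo 0 1) := by
  refine (integrableOn_log_mul_rpow_div_sqrt_one_sub_pow_four (a := 1 / 8)
    (by norm_num)).congr_fun (fun x hx ↦ ?_) measurableSet_Ioo
  rw [octahedralDensity_eq_rpow_div_sqrt hx.1]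

lemma integrableOn_log_mul_mul_octahedralDensity :
    IntegrableOn (fun x ↦ Real.log ((1 - x ^ 4) / (4 * x ^ 2)) * (x * octahedralDensity x))
      (Ioo 0 1) := by
  refine (integrableOn_log_mul_rpow_div_sqrt_one_sub_pow_four (a := 3 / 8)
    (by norm_num)).congr_fun (fun x hx ↦ ?_) measurableSet_Ioo
  rw [mul_octahedralDensity_eq_rpow_div_sqrt hx.1]

lemma integral_log_mul_octahedralDensity :
    ∫ x in Ioo 0 1, Real.log ((1 - x ^ 4) / (4 * x ^ 2)) * octahedralDensity x
      = π / 2 * ∫ x in Ioo 0 1, octahedralDensity x := by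
  rw [setIntegral_congr_fun measurableSet_Ioo fun x hx ↦ by
      rw [octahedralDensity_eq_rpow_div_sqrt hx.1],
    integral_log_mul_rpow_div_sqrt_one_sub_pow_four (by norm_num), integral_octahedralDensity,
    show 2 * (1 / 8 : ℝ) = 1 / 4 by norm_num, logDeriv_Gamma_half_sub_quarter, mul_comm]

lemma integral_log_mul_mul_octahedralDensity :
    ∫ x in Ioo 0 1, Real.log ((1 - x ^ 4) / (4 * x ^ 2)) * (x * octahedralDensity x)
      = -(π / 2) * ∫ x in Ioo 0 1, x * octahedralDensity x := by
  rw [setIntegral_congr_fun measurableSet_Ioo fun x hx ↦ by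
      rw [mul_octahedralDensity_eq_rpow_div_sqrt hx.1],
    integral_log_mul_rpow_div_sqrt_one_sub_pow_four (by norm_num), integral_mul_octahedralDensity,
    show 2 * (3 / 8 : ℝ) = 3 / 4 by norm_num, logDeriv_Gamma_half_sub_three_quarters, mul_comm]

end OctahedralDensity

section OctahedralSymmetry

lemma bijOn_one_sub_div_one_add_Ioo :
    BijOn (fun x : ℝ ↦ (1 - x) / (1 + x)) (Ioo 0 1) (Ioo 0 1) := by
  have hmaps : MapsTo (fun x : ℝ ↦ (1 - x) / (1 + x)) (Ioo 0 1) (Ioo 0 1) := fun x ⟨h₀, h₁⟩ ↦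
    ⟨div_pos (by linarith) (by linarith), (div_lt_one (by linarith)).2 (by linarith)⟩
  have hinv : LeftInvOn (fun x : ℝ ↦ (1 - x) / (1 + x)) (fun x ↦ (1 - x) / (1 + x))
      (Ioo 0 1) := by
    intro x ⟨h₀, h₁⟩
    have : 1 + x ≠ 0 := by positivity
    field_simp
    ring
  exact InvOn.bijOn ⟨hinv, hinv⟩ hmaps hmaps

lemma hasDerivAt_one_sub_div_one_add {x : ℝ} (hx : 1 + x ≠ 0) :
    HasDerivAt (fun x : ℝ ↦ (1 - x) / (1 + x)) (-(2 / (1 + x) ^ 2)) x := by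
  refine (((hasDerivAt_id' x).const_sub 1).div ((hasDerivAt_id' x).const_add 1) hx).congr_deriv ?_
  ring

lemma abs_deriv_mul_octahedralDensity_one_sub_div_one_add {x : ℝ} (hx : x ∈ Ioo 0 1) :
    |-(2 / (1 + x) ^ 2)| * octahedralDensity ((1 - x) / (1 + x))
      = (octahedralDensity x + x * octahedralDensity x) / √2 := by
  obtain ⟨h₀, h₁⟩ := hx
  have hquintic : (1 - x) / (1 + x) * (1 - ((1 - x) / (1 + x)) ^ 4)
      = (2 / (1 + x) ^ 3) ^ 2 * (2 * (x * (1 - x ^ 4))) := by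
    field_simp
    ring
  have hroot : 0 < √(x * (1 - x ^ 4)) :=
    Real.sqrt_pos.2 (mul_pos h₀ (sub_pos.2 (pow_lt_one₀ h₀.le h₁ four_ne_zero)))
  rw [octahedralDensity, octahedralDensity, hquintic, Real.sqrt_mul (by positivity),
    Real.sqrt_sq (by positivity), Real.sqrt_mul zero_le_two, abs_neg, abs_of_pos (by positivity)]
  field_simp

lemma integral_mul_octahedralDensity_eq_comp_one_sub_div_one_add (F : ℝ → ℝ) :
    ∫ x in Ioo 0 1, F x * octahedralDensity x
      = ∫ x in Ioo 0 1, F ((1 - x) / (1 + x))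
        * ((octahedralDensity x + x * octahedralDensity x) / √2) := by
  rw [setIntegral_eq_of_bijOn measurableSet_Ioo bijOn_one_sub_div_one_add_Ioo
    fun x hx ↦ hasDerivAt_one_sub_div_one_add (add_pos one_pos hx.1).ne']
  refine setIntegral_congr_fun measurableSet_Ioo fun x hx ↦ ?_
  rw [mul_left_comm, abs_deriv_mul_octahedralDensity_one_sub_div_one_add hx]

lemma integrableOn_mul_octahedralDensity_iff_comp_one_sub_div_one_add (F : ℝ → ℝ) :
    IntegrableOn (fun x ↦ F x * octahedralDensity x) (Ioo 0 1) ↔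
      IntegrableOn (fun x ↦ F ((1 - x) / (1 + x))
        * ((octahedralDensity x + x * octahedralDensity x) / √2)) (Ioo 0 1) := by
  rw [integrableOn_iff_of_bijOn measurableSet_Ioo bijOn_one_sub_div_one_add_Ioo
    fun x hx ↦ hasDerivAt_one_sub_div_one_add (add_pos one_pos hx.1).ne']
  refine integrableOn_congr_fun (fun x hx ↦ ?_) measurableSet_Ioo
  rw [mul_left_comm, abs_deriv_mul_octahedralDensity_one_sub_div_one_add hx]

lemma integral_octahedralDensity_eq_mul_integral_mul :
    ∫ x in Ioo 0 1, octahedralDensity x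
      = (1 + √2) * ∫ x in Ioo 0 1, x * octahedralDensity x := by
  have h := integral_mul_octahedralDensity_eq_comp_one_sub_div_one_add fun _ ↦ 1
  simp only [one_mul] at h
  rw [integral_div, integral_add integrableOn_octahedralDensity integrableOn_mul_octahedralDensity,
    eq_div_iff (by positivity)] at h
  have hsq : √2 * √2 = 2 := Real.mul_self_sqrt zero_le_two
  linear_combination (1 + √2) * h - (∫ x in Ioo 0 1, octahedralDensity x) * hsq

lemma quotient_comp_one_sub_div_one_add {x : ℝ} (hx : 0 < x) :
    2 * ((1 - x) / (1 + x)) * (1 + ((1 - x) / (1 + x)) ^ 2) / (1 - ((1 - x) / (1 + x)) ^ 2) ^ 2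
      = (1 - x ^ 4) / (4 * x ^ 2) := by
  have hx₁ : 1 + x ≠ 0 := by positivity
  have hsq : 1 - ((1 - x) / (1 + x)) ^ 2 = 4 * x / (1 + x) ^ 2 := by field_simp; ring
  rw [hsq]
  field_simp
  ring

lemma log_comp_one_sub_div_one_add_mul {x : ℝ} (hx : 0 < x) :
    Real.log (2 * ((1 - x) / (1 + x)) * (1 + ((1 - x) / (1 + x)) ^ 2)
        / (1 - ((1 - x) / (1 + x)) ^ 2) ^ 2)
        * ((octahedralDensity x + x * octahedralDensity x) / √2)
      = (Real.log ((1 - x ^ 4) / (4 * x ^ 2)) * octahedralDensity x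
        + Real.log ((1 - x ^ 4) / (4 * x ^ 2)) * (x * octahedralDensity x)) / √2 := by
  rw [quotient_comp_one_sub_div_one_add hx]
  ring

lemma integrableOn_log_quotient_mul_octahedralDensity :
    IntegrableOn (fun x ↦ Real.log (2 * x * (1 + x ^ 2) / (1 - x ^ 2) ^ 2) * octahedralDensity x)
      (Ioo 0 1) := by
  rw [integrableOn_mul_octahedralDensity_iff_comp_one_sub_div_one_add,
    integrableOn_congr_fun (fun x hx ↦ log_comp_one_sub_div_one_add_mul hx.1)
      measurableSet_Ioo]
  exact (integrableOn_log_mul_octahedralDensity.add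
    integrableOn_log_mul_mul_octahedralDensity).div_const _

lemma integral_log_quotient_mul_octahedralDensity :
    ∫ x in Ioo 0 1, Real.log (2 * x * (1 + x ^ 2) / (1 - x ^ 2) ^ 2) * octahedralDensity x
      = π / 2 * ∫ x in Ioo 0 1, x * octahedralDensity x := by
  rw [integral_mul_octahedralDensity_eq_comp_one_sub_div_one_add,
    setIntegral_congr_fun measurableSet_Ioo fun x hx ↦ log_comp_one_sub_div_one_add_mul hx.1,
    integral_div, integral_add integrableOn_log_mul_octahedralDensity
      integrableOn_log_mul_mul_octahedralDensity,
    integral_log_mul_octahedralDensity, integral_log_mul_mul_octahedralDensity,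
    integral_octahedralDensity_eq_mul_integral_mul]
  field_simp
  ring

lemma three_mul_log_one_add_sq_div_one_sub_sq {x : ℝ} (hx : x ∈ Ioo 0 1) :
    3 * Real.log ((1 + x ^ 2) / (1 - x ^ 2))
      = Real.log ((1 - x ^ 4) / (4 * x ^ 2))
        + 2 * Real.log (2 * x * (1 + x ^ 2) / (1 - x ^ 2) ^ 2) := by
  obtain ⟨h₀, h₁⟩ := hx
  have hsub : 1 - x ^ 2 ≠ 0 := by nlinarith
  have hsub' : 1 - x ^ 4 ≠ 0 := (sub_pos.2 (pow_lt_one₀ h₀.le h₁ four_ne_zero)).ne'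
  calc 3 * Real.log ((1 + x ^ 2) / (1 - x ^ 2))
      = Real.log (((1 + x ^ 2) / (1 - x ^ 2)) ^ 3) := by rw [Real.log_pow]; norm_num
    _ = Real.log ((1 - x ^ 4) / (4 * x ^ 2)
          * (2 * x * (1 + x ^ 2) / (1 - x ^ 2) ^ 2) ^ 2) := by
        congr 1
        field_simp
        ring
    _ = _ := by
        rw [Real.log_mul (by positivity) (by positivity), Real.log_pow]
        norm_num

lemma integral_log_one_add_sq_div_one_sub_sq_mul_octahedralDensity :
    ∫ x in Ioo 0 1, Real.log ((1 + x ^ 2) / (1 - x ^ 2)) * octahedralDensity x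
      = π / 6 * (3 + √2) * ∫ x in Ioo 0 1, x * octahedralDensity x := by
  have hsplit : ∀ x ∈ Ioo (0 : ℝ) 1, 3 * (Real.log ((1 + x ^ 2) / (1 - x ^ 2))
      * octahedralDensity x) = Real.log ((1 - x ^ 4) / (4 * x ^ 2)) * octahedralDensity x
        + 2 * (Real.log (2 * x * (1 + x ^ 2) / (1 - x ^ 2) ^ 2) * octahedralDensity x) := by
    intro x hx
    rw [← mul_assoc, three_mul_log_one_add_sq_div_one_sub_sq hx]
    ring
  have h := setIntegral_congr_fun (μ := volume) measurableSet_Ioo hsplit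
  rw [integral_const_mul, integral_add integrableOn_log_mul_octahedralDensity
      (integrableOn_log_quotient_mul_octahedralDensity.const_mul 2), integral_const_mul,
    integral_log_mul_octahedralDensity, integral_log_quotient_mul_octahedralDensity,
    integral_octahedralDensity_eq_mul_integral_mul] at h
  linear_combination h / 3

end OctahedralSymmetry

section EllipticIntegral

variable {k p v : ℝ}

lemma arcosh_le_sqrt_two_mul_sub_one {x : ℝ} (hx : 1 ≤ x) :
    Real.arcosh x ≤ √(2 * (x - 1)) := by
  refine Real.le_sqrt_of_sq_le ?_
  set u := Real.arcosh x with hu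
  have hu₀ : 0 ≤ u / 2 := by have := Real.arcosh_nonneg hx; positivity
  have hcosh : x = 1 + 2 * Real.sinh (u / 2) ^ 2 := by
    rw [← Real.cosh_arcosh hx, ← hu, ← mul_div_cancel₀ u two_ne_zero, Real.cosh_two_mul,
      Real.cosh_sq]
    simp only [mul_div_cancel₀ u two_ne_zero]
    ring
  have hsinh : (u / 2) ^ 2 ≤ Real.sinh (u / 2) ^ 2 := by
    have := Real.self_le_sinh_iff.2 hu₀
    gcongr
  linarith

lemma arcosh_inv_nonneg (hv : v ∈ Ioo 0 1) : 0 ≤ Real.arcosh v⁻¹ :=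
  Real.arcosh_nonneg ((one_le_inv₀ hv.1).2 hv.2.le)

lemma arcosh_inv_le (hv : v ∈ Ioo 0 1) : Real.arcosh v⁻¹ ≤ √2 * (√(1 - v) / √v) := by
  rw [← Real.sqrt_div (sub_pos.2 hv.2).le, ← Real.sqrt_mul zero_le_two]
  convert arcosh_le_sqrt_two_mul_sub_one ((one_le_inv₀ hv.1).2 hv.2.le) using 3
  have := hv.1.ne'
  field_simp

lemma hasDerivAt_arcosh_inv (hv : v ∈ Ioo 0 1) :
    HasDerivAt (fun v : ℝ ↦ Real.arcosh v⁻¹) (-(1 / (v * √(1 - v ^ 2)))) v := by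
  obtain ⟨h₀, h₁⟩ := hv
  have hsub : 0 < 1 - v ^ 2 := by nlinarith
  refine ((Real.hasDerivAt_arcosh (one_lt_inv_iff₀.2 ⟨h₀, h₁⟩)).comp v
    (hasDerivAt_inv h₀.ne')).congr_deriv ?_
  rw [show v⁻¹ ^ 2 - 1 = (1 - v ^ 2) / v ^ 2 by field_simp, Real.sqrt_div hsub.le,
    Real.sqrt_sq h₀.le]
  field_simp

lemma one_sub_sq_mul_sq_pos (hk : k ^ 2 < 1) (hv : v ∈ Icc 0 1) : 0 < 1 - k ^ 2 * v ^ 2 := by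
  have : v ^ 2 ≤ 1 := pow_le_one₀ hv.1 hv.2
  nlinarith [sq_nonneg k]

lemma hasDerivAt_div_sqrt_one_sub_sq_mul_sq (hD : 0 < 1 - k ^ 2 * v ^ 2) :
    HasDerivAt (fun v ↦ v / √(1 - k ^ 2 * v ^ 2)) ((1 - k ^ 2 * v ^ 2) ^ (-(3 / 2) : ℝ)) v := by
  have hroot := Real.sqrt_pos.2 hD
  have hrpow : (1 - k ^ 2 * v ^ 2) ^ (-(3 / 2) : ℝ) = 1 / √(1 - k ^ 2 * v ^ 2) ^ 3 := by
    rw [Real.sqrt_eq_rpow, ← Real.rpow_mul_natCast hD.le, Real.rpow_neg hD.le, one_div]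
    norm_num
  refine ((hasDerivAt_id' v).div ((((hasDerivAt_pow 2 v).const_mul (k ^ 2)).const_sub 1).sqrt
    hD.ne') hroot.ne').congr_deriv ?_
  rw [hrpow]
  have hsq := Real.sq_sqrt hD.le
  field_simp
  rw [hsq]
  push_cast
  ring

lemma tendsto_arcosh_inv_mul_div_sqrt (hk : k ^ 2 < 1) {c : ℝ} (hc : c = 0 ∨ c = 1) :
    Tendsto (fun v ↦ Real.arcosh v⁻¹ * (v / √(1 - k ^ 2 * v ^ 2))) (𝓝[Ioo 0 1] c) (𝓝 0) := by
  have hc' : √2 * (√(1 - c) * √c / √(1 - k ^ 2 * c ^ 2)) = 0 := by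
    rcases hc with rfl | rfl <;> simp
  have hD := one_sub_sq_mul_sq_pos hk (v := c) (by rcases hc with rfl | rfl <;> simp)
  have hcont : ContinuousAt (fun v ↦ √2 * (√(1 - v) * √v / √(1 - k ^ 2 * v ^ 2))) c := by
    have := (Real.sqrt_pos.2 hD).ne'
    fun_prop (disch := assumption)
  refine squeeze_zero' ?_ ?_ ((hc' ▸ hcont.tendsto).mono_left nhdsWithin_le_nhds)
  · filter_upwards [self_mem_nhdsWithin] with v hv
    have := arcosh_inv_nonneg hv
    have := hv.1.le
    positivity
  · filter_upwards [self_mem_nhdsWithin] with v hv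
    calc Real.arcosh v⁻¹ * (v / √(1 - k ^ 2 * v ^ 2))
        ≤ √2 * (√(1 - v) / √v) * (v / √(1 - k ^ 2 * v ^ 2)) := by
          have := hv.1.le
          gcongr
          exact arcosh_inv_le hv
      _ = √2 * (√(1 - v) * (v / √v) / √(1 - k ^ 2 * v ^ 2)) := by ring
      _ = √2 * (√(1 - v) * √v / √(1 - k ^ 2 * v ^ 2)) := by rw [Real.div_sqrt]

lemma arcosh_inv_mul_one_sub_sq_rpow_le (hp : -1 ≤ p) (hv : v ∈ Ioo 0 1) :
    Real.arcosh v⁻¹ * (1 - v ^ 2) ^ (-((p + 1) / 2))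
      ≤ √2 * (v ^ ((1 / 2 : ℝ) - 1) * (1 - v) ^ (1 - p / 2 - 1)) := by
  have h₀ : 0 < v := hv.1
  have h₁ : 0 < 1 - v := sub_pos.2 hv.2
  have hbound : Real.arcosh v⁻¹ ≤ √2 * (v ^ ((1 / 2 : ℝ) - 1) * (1 - v) ^ (1 / 2 : ℝ)) := by
    refine (arcosh_inv_le hv).trans_eq ?_
    rw [Real.sqrt_eq_rpow (1 - v), Real.sqrt_eq_rpow v, div_eq_mul_inv, ← Real.rpow_neg h₀.le,
      mul_comm (_ ^ _)]
    norm_num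
  have hpow : (1 - v ^ 2) ^ (-((p + 1) / 2)) ≤ (1 - v) ^ (-((p + 1) / 2)) :=
    Real.rpow_le_rpow_of_nonpos h₁ (by nlinarith) (by linarith)
  calc Real.arcosh v⁻¹ * (1 - v ^ 2) ^ (-((p + 1) / 2))
      ≤ √2 * (v ^ ((1 / 2 : ℝ) - 1) * (1 - v) ^ (1 / 2 : ℝ))
        * (1 - v) ^ (-((p + 1) / 2)) := by gcongr; exact Real.rpow_nonneg (by nlinarith) _
    _ = √2 * (v ^ ((1 / 2 : ℝ) - 1) * (1 - v) ^ (1 / 2 + -((p + 1) / 2))) := by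
        rw [Real.rpow_add h₁]
        ring
    _ = √2 * (v ^ ((1 / 2 : ℝ) - 1) * (1 - v) ^ (1 - p / 2 - 1)) := by ring_nf

lemma integrableOn_arcosh_inv_mul_one_sub_sq_rpow (hp : -1 ≤ p) (hp' : p < 2) :
    IntegrableOn (fun v : ℝ ↦ Real.arcosh v⁻¹ * (1 - v ^ 2) ^ (-((p + 1) / 2))) (Ioo 0 1) := by
  refine ((integrableOn_rpow_mul_one_sub_rpow one_half_pos (show 0 < 1 - p / 2 by
    linarith)).const_mul √2).mono' ?_ ?_
  · exact (by unfold Real.arcosh; fun_prop : Measurable _).aestronglyMeasurable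
  · filter_upwards [ae_restrict_mem measurableSet_Ioo] with v hv
    rw [Real.norm_of_nonneg (mul_nonneg (arcosh_inv_nonneg hv)
      (Real.rpow_nonneg (by nlinarith [hv.1, hv.2]) _))]
    exact arcosh_inv_mul_one_sub_sq_rpow_le hp hv

lemma integrableOn_arcosh_inv_mul_one_sub_sq_mul_sq_rpow (hk : k ^ 2 < 1) :
    IntegrableOn (fun v : ℝ ↦ Real.arcosh v⁻¹ * (1 - k ^ 2 * v ^ 2) ^ (-(3 / 2) : ℝ))
      (Ioo 0 1) := by
  have harcosh : IntegrableOn (fun v : ℝ ↦ Real.arcosh v⁻¹) (Icc 0 1) := by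
    rw [integrableOn_Icc_iff_integrableOn_Ioo]
    simpa using integrableOn_arcosh_inv_mul_one_sub_sq_rpow (le_refl (-1)) (by norm_num)
  refine (harcosh.mul_continuousOn ?_ isCompact_Icc).mono_set Ioo_subset_Icc_self
  exact ContinuousOn.rpow_const (by fun_prop) fun v hv ↦ .inl (one_sub_sq_mul_sq_pos hk hv).ne'

lemma integrableOn_one_div_sqrt_one_sub_sq_mul (hk : k ^ 2 < 1) :
    IntegrableOn (fun v : ℝ ↦ 1 / √((1 - v ^ 2) * (1 - k ^ 2 * v ^ 2))) (Ioo 0 1) := by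
  have hbeta : IntegrableOn (fun v : ℝ ↦ (1 - v) ^ (-(1 / 2) : ℝ)) (Icc 0 1) := by
    rw [integrableOn_Icc_iff_integrableOn_Ioo]
    refine (integrableOn_rpow_mul_one_sub_rpow one_pos one_half_pos).congr_fun (fun v _ ↦ ?_)
      measurableSet_Ioo
    norm_num
  have hcont : ContinuousOn (fun v : ℝ ↦ 1 / √((1 + v) * (1 - k ^ 2 * v ^ 2))) (Icc 0 1) :=
    continuousOn_const.div (by fun_prop) fun v hv ↦ (Real.sqrt_pos.2 (mul_pos
      (by linarith [hv.1]) (one_sub_sq_mul_sq_pos hk hv))).ne'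
  refine ((hbeta.mul_continuousOn hcont isCompact_Icc).mono_set Ioo_subset_Icc_self).congr_fun
    (fun v hv ↦ ?_) measurableSet_Ioo
  have h₁ : 0 ≤ 1 - v := (sub_pos.2 hv.2).le
  dsimp only
  rw [Real.rpow_neg h₁, ← Real.sqrt_eq_rpow, show (1 - v ^ 2) * (1 - k ^ 2 * v ^ 2)
    = (1 - v) * ((1 + v) * (1 - k ^ 2 * v ^ 2)) by ring, Real.sqrt_mul h₁]
  field_simp

theorem EllK_eq_integral_arcosh_inv_mul (hk : k ^ 2 < 1) :
    EllK k = ∫ v in Ioo 0 1, Real.arcosh v⁻¹ * (1 - k ^ 2 * v ^ 2) ^ (-(3 / 2) : ℝ) := by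
  have hderiv : ∀ v ∈ Ioo (0 : ℝ) 1,
      HasDerivAt (fun v ↦ Real.arcosh v⁻¹ * (v / √(1 - k ^ 2 * v ^ 2)))
        (Real.arcosh v⁻¹ * (1 - k ^ 2 * v ^ 2) ^ (-(3 / 2) : ℝ)
          - 1 / √((1 - v ^ 2) * (1 - k ^ 2 * v ^ 2))) v := by
    intro v hv
    have hv₀ := hv.1.ne'
    refine ((hasDerivAt_arcosh_inv hv).mul (hasDerivAt_div_sqrt_one_sub_sq_mul_sq
      (one_sub_sq_mul_sq_pos hk (Ioo_subset_Icc_self hv)))).congr_deriv ?_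
    rw [Real.sqrt_mul (by nlinarith [hv.1, hv.2])]
    field_simp
    ring
  have hint₁ := integrableOn_arcosh_inv_mul_one_sub_sq_mul_sq_rpow hk
  have hint₂ := integrableOn_one_div_sqrt_one_sub_sq_mul hk
  have hFTC := intervalIntegral.integral_eq_sub_of_hasDerivAt_of_tendsto one_pos hderiv
    ((intervalIntegrable_iff_integrableOn_Ioo_of_le zero_le_one).2 (hint₁.sub hint₂))
    (nhdsWithin_Ioo_eq_nhdsGT (one_pos (α := ℝ)) ▸ tendsto_arcosh_inv_mul_div_sqrt hk (.inl rfl))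
    (nhdsWithin_Ioo_eq_nhdsLT (one_pos (α := ℝ)) ▸ tendsto_arcosh_inv_mul_div_sqrt hk (.inr rfl))
  rw [sub_self, intervalIntegral.integral_of_le zero_le_one, integral_Ioc_eq_integral_Ioo,
    integral_sub hint₁ hint₂, sub_eq_zero] at hFTC
  rw [EllK, intervalIntegral.integral_of_le zero_le_one, integral_Ioc_eq_integral_Ioo, hFTC]

end EllipticIntegral

section ModulusMoments

variable {c k p : ℝ}

lemma one_sub_sq_mul_pos (hc : c ∈ Ioo 0 1) (hk : k ∈ Ioo 0 1) : 0 < 1 - k ^ 2 * c := by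
  nlinarith [hc.1, hc.2, hk.1, hk.2, mul_pos hk.1 hc.1]

lemma one_sub_sq_mul_one_sub_div (hk : 1 - k ^ 2 * c ≠ 0) :
    1 - k ^ 2 * (1 - c) / (1 - k ^ 2 * c) = (1 - k ^ 2) / (1 - k ^ 2 * c) := by
  rw [one_sub_div hk]
  ring

lemma bijOn_sq_mul_one_sub_div_Ioo (hc : c ∈ Ioo 0 1) :
    BijOn (fun k : ℝ ↦ k ^ 2 * (1 - c) / (1 - k ^ 2 * c)) (Ioo 0 1) (Ioo 0 1) := by
  have hc₁ : 0 < 1 - c := sub_pos.2 hc.2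
  have hD {t : ℝ} (ht : t ∈ Ioo 0 1) : 0 < 1 - c * (1 - t) := by nlinarith [ht.1, ht.2, hc.1]
  refine InvOn.bijOn (f' := fun t ↦ √(t / (1 - c * (1 - t)))) ⟨fun k hk ↦ ?_, fun t ht ↦ ?_⟩
    (fun k hk ↦ ⟨?_, sub_pos.1 ?_⟩) (fun t ht ↦ ⟨?_, ?_⟩)
  · have hk₁ := (one_sub_sq_mul_pos hc hk).ne'
    have hk₂ : 1 - c * ((1 - k ^ 2) / (1 - k ^ 2 * c)) = (1 - c) / (1 - k ^ 2 * c) := by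
      rw [← mul_div_assoc, one_sub_div hk₁]
      ring
    dsimp only
    rw [one_sub_sq_mul_one_sub_div hk₁, hk₂, div_div_div_cancel_right₀ hk₁,
      mul_div_cancel_right₀ _ hc₁.ne', Real.sqrt_sq hk.1.le]
  · have ht₁ := hD ht
    have ht₂ : 1 - t / (1 - c * (1 - t)) * c = (1 - c) / (1 - c * (1 - t)) := by
      rw [div_mul_eq_mul_div, one_sub_div ht₁.ne']
      ring
    dsimp only
    rw [Real.sq_sqrt (div_pos ht.1 ht₁).le, ht₂, div_mul_eq_mul_div,
      div_div_div_cancel_right₀ ht₁.ne', mul_div_cancel_right₀ _ hc₁.ne']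
  · exact div_pos (mul_pos (pow_pos hk.1 2) hc₁) (one_sub_sq_mul_pos hc hk)
  · rw [one_sub_sq_mul_one_sub_div (one_sub_sq_mul_pos hc hk).ne']
    exact div_pos (sub_pos.2 (pow_lt_one₀ hk.1.le hk.2 two_ne_zero)) (one_sub_sq_mul_pos hc hk)
  · exact Real.sqrt_pos.2 (div_pos ht.1 (hD ht))
  · rw [Real.sqrt_lt' one_pos, one_pow, div_lt_one (hD ht)]
    nlinarith [ht.1, ht.2, hc.2]

lemma hasDerivAt_sq_mul_one_sub_div (hk : 1 - k ^ 2 * c ≠ 0) :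
    HasDerivAt (fun k ↦ k ^ 2 * (1 - c) / (1 - k ^ 2 * c))
      (2 * k * (1 - c) / (1 - k ^ 2 * c) ^ 2) k := by
  have hsq : HasDerivAt (fun k : ℝ ↦ k ^ 2) (2 * k) k := by simpa using hasDerivAt_pow 2 k
  refine ((hsq.mul_const (1 - c)).div ((hsq.mul_const c).const_sub 1) hk).congr_deriv ?_
  ring

lemma abs_deriv_mul_beta_integrand (hc : c ∈ Ioo 0 1) (hk : k ∈ Ioo 0 1) :
    |2 * k * (1 - c) / (1 - k ^ 2 * c) ^ 2|
        * ((k ^ 2 * (1 - c) / (1 - k ^ 2 * c)) ^ ((p + 1) / 2 - 1)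
          * (1 - k ^ 2 * (1 - c) / (1 - k ^ 2 * c)) ^ (1 - p / 2 - 1))
      = 2 * (1 - c) ^ ((p + 1) / 2)
        * ((k / √(1 - k ^ 2)) ^ p * (1 - k ^ 2 * c) ^ (-(3 / 2) : ℝ)) := by
  have hk₀ : 0 < k := hk.1
  have hk' : 0 < 1 - k ^ 2 := sub_pos.2 (pow_lt_one₀ hk.1.le hk.2 two_ne_zero)
  have hc' : 0 < 1 - c := sub_pos.2 hc.2
  have hD := one_sub_sq_mul_pos hc hk
  have hkpow : k ^ p = k * (k ^ 2) ^ ((p + 1) / 2 - 1) := by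
    rw [← Real.rpow_two, ← Real.rpow_mul hk₀.le,
      show 2 * ((p + 1) / 2 - 1) = p - 1 by ring, Real.rpow_sub_one hk₀.ne',
      mul_div_cancel₀ _ hk₀.ne']
  have hcpow : (1 - c) ^ ((p + 1) / 2) = (1 - c) * (1 - c) ^ ((p + 1) / 2 - 1) := by
    rw [Real.rpow_sub_one hc'.ne', mul_div_cancel₀ _ hc'.ne']
  have hDpow : (1 - k ^ 2 * c) ^ (-(3 / 2) : ℝ) = ((1 - k ^ 2 * c) ^ 2
      * ((1 - k ^ 2 * c) ^ ((p + 1) / 2 - 1) * (1 - k ^ 2 * c) ^ (1 - p / 2 - 1)))⁻¹ := by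
    rw [← Real.rpow_two (1 - k ^ 2 * c), ← Real.rpow_add hD, ← Real.rpow_add hD,
      ← Real.rpow_neg hD.le]
    ring_nf
  have hsqrt : (1 - k ^ 2) ^ (1 - p / 2 - 1) = (√(1 - k ^ 2) ^ p)⁻¹ := by
    rw [Real.sqrt_eq_rpow, ← Real.rpow_mul hk'.le, ← Real.rpow_neg hk'.le]
    ring_nf
  rw [one_sub_sq_mul_one_sub_div hD.ne', abs_of_pos (by positivity),
    Real.div_rpow (by positivity) hD.le, Real.mul_rpow (by positivity) hc'.le,
    Real.div_rpow hk'.le hD.le,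
    Real.div_rpow hk₀.le (Real.sqrt_nonneg _), hkpow, hcpow, hDpow, hsqrt]
  generalize 1 - k ^ 2 * c = D
  ring

lemma integrableOn_div_sqrt_one_sub_sq_rpow_mul (hc : c ∈ Ioo 0 1) (hp : -1 < p) (hp' : p < 2) :
    IntegrableOn (fun k : ℝ ↦ (k / √(1 - k ^ 2)) ^ p * (1 - k ^ 2 * c) ^ (-(3 / 2) : ℝ))
      (Ioo 0 1) := by
  have hbeta := integrableOn_rpow_mul_one_sub_rpow (show 0 < (p + 1) / 2 by linarith)
    (show 0 < 1 - p / 2 by linarith)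
  rw [integrableOn_iff_of_bijOn measurableSet_Ioo (bijOn_sq_mul_one_sub_div_Ioo hc)
    fun k hk ↦ hasDerivAt_sq_mul_one_sub_div (one_sub_sq_mul_pos hc hk).ne'] at hbeta
  have hc' : 2 * (1 - c) ^ ((p + 1) / 2) ≠ 0 :=
    (mul_pos two_pos (Real.rpow_pos_of_pos (sub_pos.2 hc.2) _)).ne'
  refine (integrable_const_mul_iff hc'.isUnit _).1 ?_
  exact hbeta.congr_fun (fun k hk ↦ abs_deriv_mul_beta_integrand hc hk) measurableSet_Ioo

lemma integral_div_sqrt_one_sub_sq_rpow_mul (hc : c ∈ Ioo 0 1) (hp : -1 < p) (hp' : p < 2) :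
    ∫ k in Ioo 0 1, (k / √(1 - k ^ 2)) ^ p * (1 - k ^ 2 * c) ^ (-(3 / 2) : ℝ)
      = beta ((p + 1) / 2) (1 - p / 2) / 2 * (1 - c) ^ (-((p + 1) / 2)) := by
  have hc' : 0 < 1 - c := sub_pos.2 hc.2
  have hpow := Real.rpow_pos_of_pos hc' ((p + 1) / 2)
  rw [← integral_rpow_mul_one_sub_rpow (by linarith) (by linarith),
    setIntegral_eq_of_bijOn measurableSet_Ioo (bijOn_sq_mul_one_sub_div_Ioo hc)
      (fun k hk ↦ hasDerivAt_sq_mul_one_sub_div (one_sub_sq_mul_pos hc hk).ne')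
      (fun t ↦ t ^ ((p + 1) / 2 - 1) * _),
    setIntegral_congr_fun measurableSet_Ioo fun k hk ↦ abs_deriv_mul_beta_integrand hc hk,
    integral_const_mul, Real.rpow_neg hc'.le, mul_assoc 2, mul_div_cancel_left₀ _ two_ne_zero,
    mul_right_comm, mul_inv_cancel₀ hpow.ne', one_mul]

end ModulusMoments

section EllipticMoments

variable {p : ℝ}

lemma integrable_arcosh_inv_mul_prod (hp : -1 < p) (hp' : p < 2) :
    Integrable (fun z : ℝ × ℝ ↦ Real.arcosh z.2⁻¹
      * ((z.1 / √(1 - z.1 ^ 2)) ^ p * (1 - z.1 ^ 2 * z.2 ^ 2) ^ (-(3 / 2) : ℝ)))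
      ((volume.restrict (Ioo 0 1)).prod (volume.restrict (Ioo 0 1))) := by
  have hmeas : Measurable fun z : ℝ × ℝ ↦ Real.arcosh z.2⁻¹
      * ((z.1 / √(1 - z.1 ^ 2)) ^ p * (1 - z.1 ^ 2 * z.2 ^ 2) ^ (-(3 / 2) : ℝ)) := by
    unfold Real.arcosh
    fun_prop
  refine (integrable_prod_iff' hmeas.aestronglyMeasurable).2 ⟨?_, ?_⟩
  · filter_upwards [ae_restrict_mem measurableSet_Ioo] with v hv
    exact (integrableOn_div_sqrt_one_sub_sq_rpow_mul
      ((bijOn_pow_Ioo two_ne_zero).mapsTo hv) hp hp').const_mul _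
  · refine IntegrableOn.congr_fun ((integrableOn_arcosh_inv_mul_one_sub_sq_rpow hp.le
      hp').const_mul (beta ((p + 1) / 2) (1 - p / 2) / 2)) (fun v hv ↦ ?_) measurableSet_Ioo
    have hv' := (bijOn_pow_Ioo two_ne_zero).mapsTo hv
    have hnorm : ∀ k ∈ Ioo (0 : ℝ) 1, ‖Real.arcosh v⁻¹
        * ((k / √(1 - k ^ 2)) ^ p * (1 - k ^ 2 * v ^ 2) ^ (-(3 / 2) : ℝ))‖
        = Real.arcosh v⁻¹ * ((k / √(1 - k ^ 2)) ^ p * (1 - k ^ 2 * v ^ 2) ^ (-(3 / 2) : ℝ)) := by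
      intro k hk
      have := arcosh_inv_nonneg hv
      have := one_sub_sq_mul_pos hv' hk
      have := hk.1
      exact Real.norm_of_nonneg (by positivity)
    dsimp only
    rw [setIntegral_congr_fun measurableSet_Ioo hnorm, integral_const_mul,
      integral_div_sqrt_one_sub_sq_rpow_mul hv' hp hp']
    ring

theorem integral_div_sqrt_one_sub_sq_rpow_mul_EllK (hp : -1 < p) (hp' : p < 2) :
    ∫ k in (0 : ℝ)..1, (k / √(1 - k ^ 2)) ^ p * EllK k
      = beta ((p + 1) / 2) (1 - p / 2) / 2
        * ∫ v in Ioo 0 1, Real.arcosh v⁻¹ * (1 - v ^ 2) ^ (-((p + 1) / 2)) := by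
  rw [intervalIntegral.integral_of_le zero_le_one, integral_Ioc_eq_integral_Ioo]
  calc ∫ k in Ioo (0 : ℝ) 1, (k / √(1 - k ^ 2)) ^ p * EllK k
      = ∫ k in Ioo (0 : ℝ) 1, ∫ v in Ioo (0 : ℝ) 1, Real.arcosh v⁻¹
          * ((k / √(1 - k ^ 2)) ^ p * (1 - k ^ 2 * v ^ 2) ^ (-(3 / 2) : ℝ)) := by
        refine setIntegral_congr_fun measurableSet_Ioo fun k hk ↦ ?_
        rw [EllK_eq_integral_arcosh_inv_mul (pow_lt_one₀ hk.1.le hk.2 two_ne_zero),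
          ← integral_const_mul]
        simp only [mul_left_comm]
    _ = ∫ v in Ioo (0 : ℝ) 1, ∫ k in Ioo (0 : ℝ) 1, Real.arcosh v⁻¹
          * ((k / √(1 - k ^ 2)) ^ p * (1 - k ^ 2 * v ^ 2) ^ (-(3 / 2) : ℝ)) :=
        integral_integral_swap (integrable_arcosh_inv_mul_prod hp hp')
    _ = ∫ v in Ioo (0 : ℝ) 1, beta ((p + 1) / 2) (1 - p / 2) / 2
          * (Real.arcosh v⁻¹ * (1 - v ^ 2) ^ (-((p + 1) / 2))) := by
        refine setIntegral_congr_fun measurableSet_Ioo fun v hv ↦ ?_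
        rw [integral_const_mul, integral_div_sqrt_one_sub_sq_rpow_mul
          ((bijOn_pow_Ioo two_ne_zero).mapsTo hv) hp hp', mul_left_comm]
    _ = _ := integral_const_mul _ _

end EllipticMoments

section OctahedralSubstitution

lemma arcosh_inv_sqrt_one_sub_sq {y : ℝ} (hy : y ∈ Ico 0 1) :
    Real.arcosh (√(1 - y ^ 2))⁻¹ = 1 / 2 * Real.log ((1 + y) / (1 - y)) := by
  have hy' : y ∈ Ioo (-1) 1 := ⟨by linarith [hy.1], hy.2⟩
  rw [← one_div, ← Real.cosh_artanh hy', Real.arcosh_cosh (Real.artanh_nonneg hy.1),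
    Real.artanh_eq_half_log (Ioo_subset_Icc_self hy')]

lemma bijOn_sqrt_one_sub_pow_four_Ioo :
    BijOn (fun x : ℝ ↦ √(1 - x ^ 4)) (Ioo 0 1) (Ioo 0 1) := by
  refine (bijOn_sqrt_one_sub_sq_Ioo.comp (bijOn_pow_Ioo two_ne_zero)).congr fun x _ ↦ ?_
  simp only [Function.comp_apply, ← pow_mul]

lemma hasDerivAt_sqrt_one_sub_pow_four {x : ℝ} (hx : 1 - x ^ 4 ≠ 0) :
    HasDerivAt (fun x : ℝ ↦ √(1 - x ^ 4)) (-(2 * x ^ 3 / √(1 - x ^ 4))) x := by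
  refine (((hasDerivAt_pow_four x).const_sub 1).sqrt hx).congr_deriv ?_
  ring

lemma integral_arcosh_inv_mul_one_sub_sq_rpow_eq_integral_octahedralDensity :
    ∫ v in Ioo (0 : ℝ) 1, Real.arcosh v⁻¹ * (1 - v ^ 2) ^ (-(7 / 8) : ℝ)
      = ∫ x in Ioo 0 1, Real.log ((1 + x ^ 2) / (1 - x ^ 2)) * octahedralDensity x := by
  have hpos {x : ℝ} (hx : x ∈ Ioo 0 1) : 0 < 1 - x ^ 4 :=
    sub_pos.2 (pow_lt_one₀ hx.1.le hx.2 four_ne_zero)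
  rw [setIntegral_eq_of_bijOn measurableSet_Ioo bijOn_sqrt_one_sub_pow_four_Ioo
    fun x hx ↦ hasDerivAt_sqrt_one_sub_pow_four (hpos hx).ne']
  refine setIntegral_congr_fun measurableSet_Ioo fun x hx ↦ ?_
  have hx₀ : 0 < x := hx.1
  have h₁ := hpos hx
  have harcosh : Real.arcosh (√(1 - x ^ 4))⁻¹ = 1 / 2 * Real.log ((1 + x ^ 2) / (1 - x ^ 2)) := by
    rw [← arcosh_inv_sqrt_one_sub_sq (Ioo_subset_Ico_self
      ((bijOn_pow_Ioo two_ne_zero).mapsTo hx)), ← pow_mul]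
  have hpow : (x ^ 4) ^ (-(7 / 8) : ℝ) = x ^ (4 * (1 / 8 : ℝ) - 1) / x ^ 3 := by
    rw [← Real.rpow_natCast, ← Real.rpow_natCast, ← Real.rpow_mul hx₀.le, ← Real.rpow_sub hx₀]
    norm_num
  rw [harcosh, Real.sq_sqrt h₁.le, sub_sub_cancel, hpow, octahedralDensity_eq_rpow_div_sqrt hx₀,
    abs_neg, abs_of_pos (by positivity)]
  field_simp

end OctahedralSubstitution

section GammaValues

lemma beta_mul_beta_eq_pi_div_sin :
    beta (7 / 8) (5 / 8) * beta (3 / 8) (1 / 2) = 2 * (π / Real.sin (π * (3 / 8))) := by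
  have hreflection := Real.Gamma_mul_Gamma_one_sub (3 / 8)
  have hhalf : Real.Gamma (3 / 2) = 1 / 2 * Real.Gamma (1 / 2) := by
    rw [← Real.Gamma_add_one (by norm_num)]
    norm_num
  have hΓ₁ := (Real.Gamma_pos_of_pos (s := 7 / 8) (by norm_num)).ne'
  have hΓ₂ := (Real.Gamma_pos_of_pos one_half_pos).ne'
  rw [← hreflection, beta, beta, show (7 / 8 : ℝ) + 5 / 8 = 3 / 2 by norm_num,
    show (3 / 8 : ℝ) + 1 / 2 = 7 / 8 by norm_num, show (1 : ℝ) - 3 / 8 = 5 / 8 by norm_num, hhalf]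
  field_simp

lemma sin_pi_mul_three_eighths : Real.sin (π * (3 / 8)) = √(2 + √2) / 2 := by
  rw [← Real.cos_pi_div_eight, ← Real.cos_pi_div_two_sub]
  ring_nf

lemma three_add_sqrt_two_div_sqrt_two_add_sqrt_two :
    (3 + √2) / √(2 + √2) = √(5 + 1 / √2) := by
  have hsq : √2 ^ 2 = 2 := Real.sq_sqrt zero_le_two
  symm
  rw [Real.sqrt_eq_iff_mul_self_eq (by positivity) (by positivity), div_mul_div_comm,
    Real.mul_self_sqrt (by positivity), eq_div_iff (by positivity)]
  field_simp
  linear_combination -(√2 + 1) * hsq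

end GammaValues

theorem stmt_11 :
    ∫ k in (0:ℝ)..(1:ℝ), (k / Real.sqrt (1 - k^2)) ^ ((3:ℝ)/4) * EllK k
      = π^2 / 12 * Real.sqrt (5 + 1 / Real.sqrt 2) := by
  calc ∫ k in (0:ℝ)..(1:ℝ), (k / √(1 - k ^ 2)) ^ ((3:ℝ) / 4) * EllK k
      = beta (7 / 8) (5 / 8) / 2
          * ∫ v in Ioo 0 1, Real.arcosh v⁻¹ * (1 - v ^ 2) ^ (-(7 / 8) : ℝ) := by
        rw [integral_div_sqrt_one_sub_sq_rpow_mul_EllK (by norm_num) (by norm_num)]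
        norm_num
    _ = beta (7 / 8) (5 / 8) / 2
          * (π / 6 * (3 + √2) * (1 / 4 * beta (3 / 8) (1 / 2))) := by
        rw [integral_arcosh_inv_mul_one_sub_sq_rpow_eq_integral_octahedralDensity,
          integral_log_one_add_sq_div_one_sub_sq_mul_octahedralDensity,
          integral_mul_octahedralDensity]
    _ = π / 48 * (3 + √2) * (beta (7 / 8) (5 / 8) * beta (3 / 8) (1 / 2)) := by ring
    _ = π ^ 2 / 12 * ((3 + √2) / √(2 + √2)) := by
        rw [beta_mul_beta_eq_pi_div_sin, sin_pi_mul_three_eighths]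
        field_simp
        norm_num
    _ = π ^ 2 / 12 * √(5 + 1 / √2) := by rw [three_add_sqrt_two_div_sqrt_two_add_sqrt_two]
end

section
/- ∫₀¹ K(k)/√(1-k²) dk = Γ(1/4)⁴/(16π). -/
open scoped Real
open MeasureTheory

/-!
The half-angle substitutions `k = (1 - y²) / (1 + y²)` and `x = (1 - z²) / (1 + z²)` map `(0, ∞)` to
`(-1, 1)`. As the integrand is even in `k` and in `x`, they turn the double integral
`∫₀¹ K(k) / √(1 - k²) dk` into half of `∫₀^∞ ∫₀^∞ dz dy / √((y² + z²)(1 + y²z²))`. In the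
coordinates `z = y t`, `y = u / √t` this factors as `∫₀^∞ du / √(1 + u⁴)` times
`∫₀^∞ dt / (√t √(1 + t²))`. Both factors are beta integrals, equal to `B(1/4, 1/4) / 4` and
`B(1/4, 1/4) / 2`, and `B(1/4, 1/4) = Γ(1/4)² / √π`.
-/

open Set ENNReal
open ProbabilityTheory (beta beta_pos)

section ChangeOfVariables

theorem lintegral_comp_mul_left_Ioi {c : ℝ} (hc : 0 < c) (f : ℝ → ℝ≥0∞) :
    ∫⁻ x in Ioi 0, f (c * x) = ENNReal.ofReal c⁻¹ * ∫⁻ x in Ioi 0, f x := by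
  have hemb : MeasurableEmbedding (c * ·) := (Homeomorph.mulLeft₀ c hc.ne').measurableEmbedding
  have hpre : (c * ·) ⁻¹' Ioi 0 = Ioi 0 := by
    ext x
    simp [hc]
  calc ∫⁻ x in Ioi 0, f (c * x)
      = ∫⁻ x in Ioi 0, f x ∂(volume.map (c * ·)) := by
        rw [hemb.restrict_map, hemb.lintegral_map, hpre]
    _ = ENNReal.ofReal c⁻¹ * ∫⁻ x in Ioi 0, f x := by
        rw [Real.map_volume_mul_left hc.ne', abs_of_pos (inv_pos.2 hc), Measure.restrict_smul,
          lintegral_smul_measure, smul_eq_mul]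

theorem lintegral_comp_rpow_Ioi_of_pos {c : ℝ} (hc : 0 < c) (f : ℝ → ℝ≥0∞) :
    ∫⁻ t in Ioi 0, ENNReal.ofReal (c * t ^ (c - 1)) * f (t ^ c) = ∫⁻ t in Ioi 0, f t := by
  have himage : (fun t : ℝ ↦ t ^ c) '' Ioi 0 = Ioi 0 := by
    ext s
    refine ⟨?_, fun hs ↦ ⟨s ^ c⁻¹, Real.rpow_pos_of_pos hs _,
      Real.rpow_inv_rpow (le_of_lt hs) hc.ne'⟩⟩
    rintro ⟨t, ht, rfl⟩
    exact Real.rpow_pos_of_pos ht c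
  have hmono : MonotoneOn (fun t : ℝ ↦ t ^ c) (Ioi 0) := fun s hs t _ hst ↦
    Real.rpow_le_rpow (le_of_lt hs) hst hc.le
  have hderiv : ∀ t ∈ Ioi (0 : ℝ),
      HasDerivWithinAt (fun t ↦ t ^ c) (c * t ^ (c - 1)) (Ioi 0) t := fun t ht ↦
    (Real.hasDerivAt_rpow_const (Or.inl (ne_of_gt ht))).hasDerivWithinAt
  rw [← lintegral_image_eq_lintegral_deriv_mul_of_monotoneOn measurableSet_Ioi hderiv hmono f,
    himage]

theorem lintegral_Ioo_neg_self_of_even {f : ℝ → ℝ≥0∞} (hf : f.Even) (a : ℝ) :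
    ∫⁻ x in Ioo (-a) a, f x = 2 * ∫⁻ x in Ioo 0 a, f x := by
  rcases le_or_gt a 0 with ha | ha
  · simp [Ioo_eq_empty_of_le ha, Ioo_eq_empty_of_le (show a ≤ -a by linarith)]
  have hneg : ∫⁻ x in Ioo (-a) 0, f x = ∫⁻ x in Ioo 0 a, f x := by
    have h := (Measure.measurePreserving_neg (volume : Measure ℝ)).setLIntegral_comp_preimage_emb
      (MeasurableEquiv.neg ℝ).measurableEmbedding f (Ioo 0 a)
    simpa [hf _] using h
  rw [← Ioc_union_Ioo_eq_Ioo (neg_nonpos.2 ha.le) ha, lintegral_union measurableSet_Ioo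
    (disjoint_left.2 fun _ hx hx' ↦ hx.2.not_gt hx'.1), ← setLIntegral_congr Ioo_ae_eq_Ioc, hneg,
    two_mul]

theorem image_one_sub_sq_div_one_add_sq_Ioi :
    (fun y : ℝ ↦ (1 - y ^ 2) / (1 + y ^ 2)) '' Ioi 0 = Ioo (-1) 1 := by
  ext k
  constructor
  · rintro ⟨y, hy, rfl⟩
    have hy2 : 0 < y ^ 2 := pow_pos hy 2
    exact ⟨by rw [lt_div_iff₀ (by positivity)]; linarith,
      by rw [div_lt_iff₀ (by positivity)]; linarith⟩
  · rintro ⟨hk₁, hk₂⟩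
    have hpos : 0 < (1 - k) / (1 + k) := div_pos (by linarith) (by linarith)
    have hne : 1 + k ≠ 0 := by linarith
    refine ⟨√((1 - k) / (1 + k)), Real.sqrt_pos.2 hpos, ?_⟩
    simp only [Real.sq_sqrt hpos.le]
    field_simp
    ring

theorem antitoneOn_one_sub_sq_div_one_add_sq :
    AntitoneOn (fun y : ℝ ↦ (1 - y ^ 2) / (1 + y ^ 2)) (Ioi 0) := by
  intro y hy z _ hyz
  have hy : 0 < y := hy
  have hsq : y ^ 2 ≤ z ^ 2 := by gcongr
  simp only
  rw [div_le_div_iff₀ (by positivity) (by positivity)]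
  linarith

theorem hasDerivAt_one_sub_sq_div_one_add_sq (y : ℝ) :
    HasDerivAt (fun y : ℝ ↦ (1 - y ^ 2) / (1 + y ^ 2)) (-(4 * y / (1 + y ^ 2) ^ 2)) y := by
  have h := ((hasDerivAt_pow 2 y).const_sub 1).div ((hasDerivAt_pow 2 y).const_add 1)
    (by positivity : 1 + y ^ 2 ≠ 0)
  refine h.congr_deriv ?_
  field_simp
  ring

theorem lintegral_Ioo_zero_one_eq_lintegral_Ioi_of_even {f : ℝ → ℝ≥0∞} (hf : f.Even) :
    ∫⁻ k in Ioo 0 1, f k = ∫⁻ y in Ioi 0,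
      ENNReal.ofReal (2 * y / (1 + y ^ 2) ^ 2) * f ((1 - y ^ 2) / (1 + y ^ 2)) := by
  rw [← ENNReal.mul_right_inj two_ne_zero ofNat_ne_top, ← lintegral_Ioo_neg_self_of_even hf,
    ← image_one_sub_sq_div_one_add_sq_Ioi, lintegral_image_eq_lintegral_deriv_mul_of_antitoneOn
      measurableSet_Ioi (fun y _ ↦ (hasDerivAt_one_sub_sq_div_one_add_sq y).hasDerivWithinAt)
      antitoneOn_one_sub_sq_div_one_add_sq, ← lintegral_const_mul' _ _ ofNat_ne_top]
  refine lintegral_congr fun y ↦ ?_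
  rw [← mul_assoc, ← ENNReal.ofReal_ofNat 2, ← ENNReal.ofReal_mul zero_le_two]
  ring_nf

end ChangeOfVariables

section BetaIntegrals

variable {α β : ℝ}

theorem lintegral_Ioo_rpow_mul_one_sub_rpow (hα : 0 < α) (hβ : 0 < β) :
    ∫⁻ x in Ioo (0 : ℝ) 1, ENNReal.ofReal (x ^ (α - 1) * (1 - x) ^ (β - 1))
      = ENNReal.ofReal (beta α β) := by
  have hB := beta_pos hα hβ
  have h := ProbabilityTheory.lintegral_betaPDF_eq_one hα hβ
  simp only [ProbabilityTheory.lintegral_betaPDF, mul_assoc,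
    ENNReal.ofReal_mul (one_div_pos.2 hB).le] at h
  rw [lintegral_const_mul' _ _ ofReal_ne_top, one_div, ENNReal.ofReal_inv_of_pos hB, mul_comm] at h
  simpa using ENNReal.eq_inv_of_mul_eq_one_left h

theorem image_inv_one_add_Ioi : (fun t : ℝ ↦ (1 + t)⁻¹) '' Ioi 0 = Ioo 0 1 := by
  ext v
  constructor
  · rintro ⟨t, ht, rfl⟩
    have ht : 0 < t := ht
    exact ⟨by positivity, inv_lt_one_of_one_lt₀ (by linarith)⟩
  · rintro ⟨hv₀, hv₁⟩
    exact ⟨v⁻¹ - 1, sub_pos.2 ((one_lt_inv₀ hv₀).2 hv₁), by simp⟩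

theorem lintegral_Ioi_rpow_mul_one_add_rpow (hα : 0 < α) (hβ : 0 < β) :
    ∫⁻ t in Ioi (0 : ℝ), ENNReal.ofReal (t ^ (β - 1) * (1 + t) ^ (-(α + β)))
      = ENNReal.ofReal (beta α β) := by
  have hanti : AntitoneOn (fun t : ℝ ↦ (1 + t)⁻¹) (Ioi 0) := by
    intro s hs t _ hst
    have hs : 0 < s := hs
    simp only
    gcongr
  have hderiv : ∀ t ∈ Ioi (0 : ℝ),
      HasDerivWithinAt (fun t ↦ (1 + t)⁻¹) (-1 / (1 + t) ^ 2) (Ioi 0) t := fun t ht ↦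
    (((hasDerivAt_id t).const_add 1).inv (by have ht : 0 < t := ht; positivity)).hasDerivWithinAt
  rw [← lintegral_Ioo_rpow_mul_one_sub_rpow hα hβ, ← image_inv_one_add_Ioi,
    lintegral_image_eq_lintegral_deriv_mul_of_antitoneOn measurableSet_Ioi hderiv hanti]
  refine setLIntegral_congr_fun measurableSet_Ioi fun t ht ↦ ?_
  have ht : 0 < t := ht
  have hs : 0 < 1 + t := by positivity
  have hsub : 1 - (1 + t)⁻¹ = t * (1 + t)⁻¹ := by field_simp; ring
  have hpow : (1 + t) ^ (-(α + β))
      = (1 + t) ^ (-(α - 1)) * (1 + t) ^ (-(β - 1)) / (1 + t) ^ 2 := by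
    rw [← Real.rpow_add hs, ← Real.rpow_natCast _ 2, ← Real.rpow_sub hs]
    push_cast
    ring_nf
  rw [← ENNReal.ofReal_mul (by rw [neg_div, neg_neg]; positivity), hsub,
    Real.mul_rpow ht.le (by positivity), Real.inv_rpow hs.le, Real.inv_rpow hs.le,
    ← Real.rpow_neg hs.le, ← Real.rpow_neg hs.le, hpow]
  ring_nf

theorem lintegral_Ioi_rpow_mul_one_add_rpow_rpow {c : ℝ} (hα : 0 < α) (hβ : 0 < β) (hc : 0 < c) :
    ∫⁻ t in Ioi (0 : ℝ), ENNReal.ofReal (t ^ (c * β - 1) * (1 + t ^ c) ^ (-(α + β)))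
      = ENNReal.ofReal (beta α β / c) := by
  rw [div_eq_inv_mul, ENNReal.ofReal_mul (inv_pos.2 hc).le,
    ← lintegral_Ioi_rpow_mul_one_add_rpow hα hβ, ← lintegral_comp_rpow_Ioi_of_pos hc
      (fun t ↦ ENNReal.ofReal (t ^ (β - 1) * (1 + t) ^ (-(α + β)))),
    ← lintegral_const_mul' _ _ ofReal_ne_top]
  refine setLIntegral_congr_fun measurableSet_Ioi fun t ht ↦ ?_
  have ht : 0 < t := ht
  have hpow : t ^ (c * β - 1) = t ^ (c - 1) * (t ^ c) ^ (β - 1) := by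
    rw [← Real.rpow_mul ht.le, ← Real.rpow_add ht]
    ring_nf
  rw [← ENNReal.ofReal_mul (by positivity), ← ENNReal.ofReal_mul (by positivity), hpow]
  field_simp

theorem lintegral_Ioi_one_div_sqrt_one_add_pow_four :
    ∫⁻ u in Ioi (0 : ℝ), ENNReal.ofReal (1 / √(1 + u ^ 4))
      = ENNReal.ofReal (beta (1 / 4) (1 / 4) / 4) := by
  rw [← lintegral_Ioi_rpow_mul_one_add_rpow_rpow (by norm_num) (by norm_num) four_pos]
  refine lintegral_congr fun u ↦ ?_
  rw [one_div, Real.sqrt_eq_rpow, ← Real.rpow_neg (by positivity)]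
  norm_num

theorem lintegral_Ioi_one_div_sqrt_mul_sqrt_one_add_sq :
    ∫⁻ t in Ioi (0 : ℝ), ENNReal.ofReal (1 / (√t * √(1 + t ^ 2)))
      = ENNReal.ofReal (beta (1 / 4) (1 / 4) / 2) := by
  rw [← lintegral_Ioi_rpow_mul_one_add_rpow_rpow (by norm_num) (by norm_num) two_pos]
  refine setLIntegral_congr_fun measurableSet_Ioi fun t ht ↦ ?_
  have ht : 0 < t := ht
  rw [one_div, mul_inv, Real.sqrt_eq_rpow, Real.sqrt_eq_rpow, ← Real.rpow_neg (by positivity),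
    ← Real.rpow_neg (by positivity)]
  norm_num

theorem beta_one_fourth_one_fourth :
    beta (1 / 4) (1 / 4) = Real.Gamma (1 / 4) ^ 2 / √π := by
  rw [beta, ← Real.Gamma_one_half_eq]
  norm_num [sq]

end BetaIntegrals

section DoubleIntegral

/-- The symmetric integrand `1 / √((1 - k²)(1 - x²)(1 - k²x²))` through which
`∫₀¹ K(k) / √(1 - k²) dk` becomes a double integral over the unit square. -/
noncomputable def ellipticKernel (k x : ℝ) : ℝ :=
  1 / √((1 - k ^ 2) * (1 - x ^ 2) * (1 - k ^ 2 * x ^ 2))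

theorem measurable_ofReal_ellipticKernel :
    Measurable (Function.uncurry fun k x ↦ ENNReal.ofReal (ellipticKernel k x)) := by
  unfold Function.uncurry ellipticKernel
  fun_prop

theorem EllK_div_sqrt_eq_toReal_lintegral {k : ℝ} (hk : k ^ 2 ≤ 1) :
    EllK k / √(1 - k ^ 2)
      = (∫⁻ x in Ioo 0 1, ENNReal.ofReal (ellipticKernel k x)).toReal := by
  have hkernel : ∀ x, 1 / √((1 - x ^ 2) * (1 - k ^ 2 * x ^ 2)) / √(1 - k ^ 2)
      = ellipticKernel k x := fun x ↦ by
    rw [ellipticKernel, mul_assoc, Real.sqrt_mul (sub_nonneg.2 hk), div_div, mul_comm]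
  rw [EllK, intervalIntegral.integral_of_le zero_le_one, integral_Ioc_eq_integral_Ioo,
    ← integral_div]
  simp only [hkernel]
  refine integral_eq_lintegral_of_nonneg_ae (.of_forall fun x ↦ ?_) ?_
  · rw [ellipticKernel]
    positivity
  · unfold ellipticKernel
    exact Measurable.aestronglyMeasurable (by fun_prop)

theorem ellipticKernel_one_sub_sq_div_one_add_sq {y z : ℝ} (hy : 0 < y) (hz : 0 < z) :
    ellipticKernel ((1 - y ^ 2) / (1 + y ^ 2)) ((1 - z ^ 2) / (1 + z ^ 2))
      = ((1 + y ^ 2) * (1 + z ^ 2)) ^ 2 / (8 * y * z)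
        * (1 / √((y ^ 2 + z ^ 2) * (1 + y ^ 2 * z ^ 2))) := by
  have hradicand : (1 - ((1 - y ^ 2) / (1 + y ^ 2)) ^ 2) * (1 - ((1 - z ^ 2) / (1 + z ^ 2)) ^ 2) *
      (1 - ((1 - y ^ 2) / (1 + y ^ 2)) ^ 2 * ((1 - z ^ 2) / (1 + z ^ 2)) ^ 2)
      = (8 * y * z / ((1 + y ^ 2) * (1 + z ^ 2)) ^ 2) ^ 2 *
        ((y ^ 2 + z ^ 2) * (1 + y ^ 2 * z ^ 2)) := by
    field_simp
    ring
  rw [ellipticKernel, hradicand, Real.sqrt_mul (sq_nonneg _), Real.sqrt_sq (by positivity)]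
  field_simp

theorem lintegral_Ioo_Ioo_ellipticKernel_eq_lintegral_Ioi_Ioi :
    ∫⁻ k in Ioo 0 1, ∫⁻ x in Ioo 0 1, ENNReal.ofReal (ellipticKernel k x)
      = ENNReal.ofReal (1 / 2) * ∫⁻ y in Ioi (0 : ℝ), ∫⁻ z in Ioi (0 : ℝ),
        ENNReal.ofReal (1 / √((y ^ 2 + z ^ 2) * (1 + y ^ 2 * z ^ 2))) := by
  rw [lintegral_Ioo_zero_one_eq_lintegral_Ioi_of_even (fun k ↦ by simp [ellipticKernel]),
    ← lintegral_const_mul' _ _ ofReal_ne_top]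
  refine setLIntegral_congr_fun measurableSet_Ioi fun y hy ↦ ?_
  have hy : 0 < y := hy
  rw [lintegral_Ioo_zero_one_eq_lintegral_Ioi_of_even (fun x ↦ by simp [ellipticKernel]),
    ← lintegral_const_mul' _ _ ofReal_ne_top, ← lintegral_const_mul' _ _ ofReal_ne_top]
  refine setLIntegral_congr_fun measurableSet_Ioi fun z hz ↦ ?_
  have hz : 0 < z := hz
  rw [ellipticKernel_one_sub_sq_div_one_add_sq hy hz, ← ENNReal.ofReal_mul (by positivity),
    ← ENNReal.ofReal_mul (by positivity), ← ENNReal.ofReal_mul (by positivity)]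
  congr 1
  field_simp
  norm_num

theorem lintegral_Ioi_one_div_sqrt_rescale {y : ℝ} (hy : 0 < y) :
    ∫⁻ z in Ioi (0 : ℝ), ENNReal.ofReal (1 / √((y ^ 2 + z ^ 2) * (1 + y ^ 2 * z ^ 2)))
      = ∫⁻ t in Ioi (0 : ℝ), ENNReal.ofReal (1 / √((1 + t ^ 2) * (1 + t ^ 2 * y ^ 4))) := by
  have hscale : ∀ t : ℝ, ENNReal.ofReal (1 / √((1 + t ^ 2) * (1 + t ^ 2 * y ^ 4)))
      = ENNReal.ofReal y * ENNReal.ofReal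
        (1 / √((y ^ 2 + (y * t) ^ 2) * (1 + y ^ 2 * (y * t) ^ 2))) := fun t ↦ by
    have hradicand : (y ^ 2 + (y * t) ^ 2) * (1 + y ^ 2 * (y * t) ^ 2)
        = y ^ 2 * ((1 + t ^ 2) * (1 + t ^ 2 * y ^ 4)) := by ring
    rw [← ENNReal.ofReal_mul hy.le, hradicand, Real.sqrt_mul (sq_nonneg y), Real.sqrt_sq hy.le]
    congr 1
    field_simp
  simp only [hscale]
  rw [lintegral_const_mul' _ _ ofReal_ne_top, lintegral_comp_mul_left_Ioi hy
      (fun z ↦ ENNReal.ofReal (1 / √((y ^ 2 + z ^ 2) * (1 + y ^ 2 * z ^ 2)))), ← mul_assoc,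
    ← ENNReal.ofReal_mul hy.le, mul_inv_cancel₀ hy.ne', ENNReal.ofReal_one, one_mul]

theorem lintegral_Ioi_one_div_sqrt_one_add_sq_mul_pow_four {t : ℝ} (ht : 0 < t) :
    ∫⁻ y in Ioi (0 : ℝ), ENNReal.ofReal (1 / √((1 + t ^ 2) * (1 + t ^ 2 * y ^ 4)))
      = ENNReal.ofReal (1 / (√t * √(1 + t ^ 2))) *
        ∫⁻ u in Ioi (0 : ℝ), ENNReal.ofReal (1 / √(1 + u ^ 4)) := by
  have hscale : ∀ y : ℝ, ENNReal.ofReal (1 / √((1 + t ^ 2) * (1 + t ^ 2 * y ^ 4)))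
      = ENNReal.ofReal (1 / √(1 + t ^ 2)) * ENNReal.ofReal (1 / √(1 + (√t * y) ^ 4)) := fun y ↦ by
    have hpow : (√t * y) ^ 4 = t ^ 2 * y ^ 4 := by
      rw [mul_pow, pow_mul (√t) 2 2, Real.sq_sqrt ht.le]
    rw [← ENNReal.ofReal_mul (by positivity), hpow, Real.sqrt_mul (by positivity),
      one_div_mul_one_div]
  simp only [hscale]
  rw [lintegral_const_mul' _ _ ofReal_ne_top, lintegral_comp_mul_left_Ioi (Real.sqrt_pos.2 ht)
      (fun u ↦ ENNReal.ofReal (1 / √(1 + u ^ 4))), ← mul_assoc,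
    ← ENNReal.ofReal_mul (by positivity), one_div, ← mul_inv, mul_comm √(1 + t ^ 2), one_div]

theorem lintegral_Ioi_Ioi_one_div_sqrt :
    ∫⁻ y in Ioi (0 : ℝ), ∫⁻ z in Ioi (0 : ℝ),
      ENNReal.ofReal (1 / √((y ^ 2 + z ^ 2) * (1 + y ^ 2 * z ^ 2)))
      = ENNReal.ofReal (Real.Gamma (1 / 4) ^ 4 / (8 * π)) := by
  have hB : 0 < beta (1 / 4) (1 / 4) :=
    beta_pos (by norm_num) (by norm_num)
  calc ∫⁻ y in Ioi (0 : ℝ), ∫⁻ z in Ioi (0 : ℝ),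
        ENNReal.ofReal (1 / √((y ^ 2 + z ^ 2) * (1 + y ^ 2 * z ^ 2)))
      = ∫⁻ y in Ioi (0 : ℝ), ∫⁻ t in Ioi (0 : ℝ),
          ENNReal.ofReal (1 / √((1 + t ^ 2) * (1 + t ^ 2 * y ^ 4))) :=
        setLIntegral_congr_fun measurableSet_Ioi fun _ ↦ lintegral_Ioi_one_div_sqrt_rescale
    _ = ∫⁻ t in Ioi (0 : ℝ), ∫⁻ y in Ioi (0 : ℝ),
          ENNReal.ofReal (1 / √((1 + t ^ 2) * (1 + t ^ 2 * y ^ 4))) :=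
        lintegral_lintegral_swap (by unfold Function.uncurry; fun_prop)
    _ = ∫⁻ t in Ioi (0 : ℝ), ENNReal.ofReal (1 / (√t * √(1 + t ^ 2))) *
          ∫⁻ u in Ioi (0 : ℝ), ENNReal.ofReal (1 / √(1 + u ^ 4)) :=
        setLIntegral_congr_fun measurableSet_Ioi fun _ ↦
          lintegral_Ioi_one_div_sqrt_one_add_sq_mul_pow_four
    _ = ENNReal.ofReal (beta (1 / 4) (1 / 4) / 2) *
          ENNReal.ofReal (beta (1 / 4) (1 / 4) / 4) := by
        rw [lintegral_mul_const _ (by fun_prop), lintegral_Ioi_one_div_sqrt_mul_sqrt_one_add_sq,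
          lintegral_Ioi_one_div_sqrt_one_add_pow_four]
    _ = ENNReal.ofReal (Real.Gamma (1 / 4) ^ 4 / (8 * π)) := by
        rw [← ENNReal.ofReal_mul (by positivity), beta_one_fourth_one_fourth]
        congr 1
        field_simp
        rw [Real.sq_sqrt Real.pi_pos.le]
        ring

theorem lintegral_Ioo_Ioo_ellipticKernel :
    ∫⁻ k in Ioo 0 1, ∫⁻ x in Ioo 0 1, ENNReal.ofReal (ellipticKernel k x)
      = ENNReal.ofReal (Real.Gamma (1 / 4) ^ 4 / (16 * π)) := by
  rw [lintegral_Ioo_Ioo_ellipticKernel_eq_lintegral_Ioi_Ioi, lintegral_Ioi_Ioi_one_div_sqrt,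
    ← ENNReal.ofReal_mul (by norm_num)]
  congr 1
  field_simp
  norm_num

end DoubleIntegral

theorem stmt_14 :
    ∫ k in (0:ℝ)..(1:ℝ), EllK k / Real.sqrt (1 - k^2)
      = Real.Gamma (1/4) ^ 4 / (16 * π) := by
  have hmeas : Measurable fun k ↦ ∫⁻ x in Ioo 0 1, ENNReal.ofReal (ellipticKernel k x) :=
    measurable_ofReal_ellipticKernel.lintegral_prod_right
  have hfinite : ∀ᵐ k ∂volume.restrict (Ioo 0 1),
      ∫⁻ x in Ioo 0 1, ENNReal.ofReal (ellipticKernel k x) < ∞ :=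
    ae_lt_top hmeas (lintegral_Ioo_Ioo_ellipticKernel ▸ ofReal_ne_top)
  calc ∫ k in (0:ℝ)..(1:ℝ), EllK k / Real.sqrt (1 - k^2)
      = ∫ k in Ioo 0 1, EllK k / √(1 - k ^ 2) := by
        rw [intervalIntegral.integral_of_le zero_le_one, integral_Ioc_eq_integral_Ioo]
    _ = ∫ k in Ioo 0 1, (∫⁻ x in Ioo 0 1, ENNReal.ofReal (ellipticKernel k x)).toReal :=
        setIntegral_congr_fun measurableSet_Ioo fun _ hk ↦
          EllK_div_sqrt_eq_toReal_lintegral (pow_le_one₀ hk.1.le hk.2.le)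
    _ = (∫⁻ k in Ioo 0 1, ∫⁻ x in Ioo 0 1, ENNReal.ofReal (ellipticKernel k x)).toReal :=
        integral_toReal hmeas.aemeasurable hfinite
    _ = Real.Gamma (1/4) ^ 4 / (16 * π) := by
        rw [lintegral_Ioo_Ioo_ellipticKernel, ENNReal.toReal_ofReal (by positivity)]
end
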